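/- Broken replica symmetry bound for the p-spin model (p even): for every β ≥ 0, h ∈ ℝ, and every piecewise constant functional order parameter x on [0, p/2], there exists a constant C ≥ 0 (depending on β, h, p and x but not on N) such that for all N, N⁻¹ E log Z_N^{(p)}(β,h,J) ≤ ᾱ_p(β,h;x) + C/N. Consequently limsup_{N→∞} N⁻¹ E log Z_N^{(p)}(β,h,J) ≤ inf_x ᾱ_p(β,h;x). -/

import Mathlib

open MeasureTheory ProbabilityTheory Filter

noncomputable section

/-! ## Gaussian disorder -/

/-- The standard (centered, unit variance) Gaussian measure on `ℝ`. -/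
def stdGauss : Measure ℝ := gaussianReal 0 1

instance : IsProbabilityMeasure stdGauss := by unfold stdGauss; infer_instance

/-- `N` i.i.d. standard Gaussian variables. -/
def gaussN (N : ℕ) : Measure (Fin N → ℝ) := Measure.pi fun _ => stdGauss

instance (N : ℕ) : IsProbabilityMeasure (gaussN N) := by unfold gaussN; infer_instance

/-- The i.i.d. standard Gaussian couplings `J_{ij}` (only entries with `i < j` are used). -/
def gaussC (N : ℕ) : Measure (Fin N → Fin N → ℝ) := Measure.pi fun _ => gaussN N

instance (N : ℕ) : IsProbabilityMeasure (gaussC N) := by unfold gaussC; infer_instance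

/-- The i.i.d. standard Gaussian one-body fields `J_i^a`, `a = 1, …, K`
(row `⟨a-1⟩ : Fin K` corresponds to the level `a` of the paper). -/
def gaussS (K N : ℕ) : Measure (Fin K → Fin N → ℝ) := Measure.pi fun _ => gaussN N

instance (K N : ℕ) : IsProbabilityMeasure (gaussS K N) := by unfold gaussS; infer_instance

/-- I.i.d. standard Gaussian couplings indexed by subsets of sites, for the p-spin model
(only the cardinality-`p` subsets are used). -/
def gaussP (N : ℕ) : Measure (Finset (Fin N) → ℝ) := Measure.pi fun _ => stdGauss

instance (N : ℕ) : IsProbabilityMeasure (gaussP N) := by unfold gaussP; infer_instance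

/-! ## Spins and overlaps -/

/-- The spin value (`±1`) of a Boolean configuration entry. -/
def spin (b : Bool) : ℝ := if b then 1 else -1

/-- The overlap `q₁₂ = N⁻¹ ∑ᵢ σᵢ⁽¹⁾ σᵢ⁽²⁾` of two replicas. -/
def overlap (N : ℕ) (σ τ : Fin N → Bool) : ℝ := (N : ℝ)⁻¹ * ∑ i, spin (σ i) * spin (τ i)

/-! ## Piecewise constant functional order parameters and the Parisi function -/

/-- One backward step of the Parisi recursion on an interval of constancy of the
functional order parameter: from `g = f(q_a, ·)`, with value `m` of the order parameter
and `s = q_a - q`, produce `f(q, ·)`. -/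
def pStep (m s : ℝ) (g : ℝ → ℝ) (y : ℝ) : ℝ :=
  if m = 0 then ∫ z, g (y + z * Real.sqrt s) ∂stdGauss
  else m⁻¹ * Real.log (∫ z, Real.exp (m * g (y + z * Real.sqrt s)) ∂stdGauss)

/-- `parisiLevel K q m β j` is the Parisi function `f(q_{K-j}, ·; x, β)` at the node
`q_{K-j}`, obtained by `j` backward steps from the final condition `f(q_K, y) = log cosh (β y)`. -/
def parisiLevel (K : ℕ) (q m : ℕ → ℝ) (β : ℝ) : ℕ → ℝ → ℝ
  | 0 => fun y => Real.log (Real.cosh (β * y))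
  | j + 1 => pStep (m (K - j)) (q (K - j) - q (K - j - 1)) (parisiLevel K q m β j)

/-- The Parisi function `f(r, y; x, β)` for a piecewise constant order parameter `x`
given by nodes `q` and values `m`:  for `q_{a-1} ≤ r ≤ q_a` it is obtained from
`f(q_a, ·)` by one backward step with value `m_a` over a time `q_a - r`. -/
def parisiF (K : ℕ) (q m : ℕ → ℝ) (β : ℝ) (r y : ℝ) : ℝ :=
  pStep (m (sInf {a : ℕ | r ≤ q a})) (q (sInf {a : ℕ | r ≤ q a}) - r)
    (parisiLevel K q m β (K - sInf {a : ℕ | r ≤ q a})) y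

/-- The functional order parameter as a function: `x(r) = m_a` for `q_{a-1} ≤ r < q_a`,
and `x(1) = m_K`. -/
def xFun (K : ℕ) (q m : ℕ → ℝ) (r : ℝ) : ℝ :=
  if 1 ≤ r then m K else m (sInf {a : ℕ | r < q a})

/-- A piecewise constant functional order parameter:
`0 = q_0 ≤ q_1 ≤ … ≤ q_K = 1`, `0 ≤ m_1 ≤ … ≤ m_K ≤ 1`,
with the conventions `m_0 = 0`, `m_{K+1} = 1`. -/
structure OrderParam where
  K : ℕ
  hK : 1 ≤ K
  q : ℕ → ℝ
  m : ℕ → ℝ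
  hq0 : q 0 = 0
  hqK : q K = 1
  hq_mono : ∀ a, a < K → q a ≤ q (a + 1)
  hm0 : m 0 = 0
  hmtop : m (K + 1) = 1
  hm1 : 0 ≤ m 1
  hm_mono : ∀ a, 1 ≤ a → a < K → m a ≤ m (a + 1)
  hmK : m K ≤ 1

/-- Guerra's trial function `ᾱ(β, h; x) = log 2 + f(0, h; x, β) - (β²/2) ∫₀¹ r x(r) dr`. -/
def trialAlpha (K : ℕ) (q m : ℕ → ℝ) (β h : ℝ) : ℝ :=
  Real.log 2 + parisiLevel K q m β K h - β ^ 2 / 2 * ∫ r in (0 : ℝ)..1, r * xFun K q m r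

/-! ## The Sherrington–Kirkpatrick model -/

/-- The SK Hamiltonian `H_N(σ, h, J) = -(1/√N) ∑_{i<j} J_{ij} σ_i σ_j - h ∑_i σ_i`. -/
def hamSK (N : ℕ) (h : ℝ) (Jc : Fin N → Fin N → ℝ) (σ : Fin N → Bool) : ℝ :=
  -(1 / Real.sqrt N) * ∑ i, ∑ j, (if i < j then Jc i j * spin (σ i) * spin (σ j) else 0)
    - h * ∑ i, spin (σ i)

/-- The SK partition function `Z_N(β, h, J)`. -/
def ZSK (N : ℕ) (β h : ℝ) (Jc : Fin N → Fin N → ℝ) : ℝ :=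
  ∑ σ : Fin N → Bool, Real.exp (-(β * hamSK N h Jc σ))

/-- The quenched average `N⁻¹ E log Z_N(β, h, J)`. -/
def quenchedFE (N : ℕ) (β h : ℝ) : ℝ :=
  (N : ℝ)⁻¹ * ∫ Jc, Real.log (ZSK N β h Jc) ∂gaussC N

/-- The ground state energy density `e_N(J, h)`, defined by
`-e_N(J, h) = N⁻¹ min_σ H_N(σ, h, J)`. -/
def eGS (N : ℕ) (h : ℝ) (Jc : Fin N → Fin N → ℝ) : ℝ :=
  -((N : ℝ)⁻¹ * ⨅ σ : Fin N → Bool, hamSK N h Jc σ)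

/-- The quenched ground state energy density `e_N(h) = E(e_N(J, h))`. -/
def eQuenched (N : ℕ) (h : ℝ) : ℝ := ∫ Jc, eGS N h Jc ∂gaussC N

/-! ## The interpolating system -/

/-- The interpolating Boltzmann factor. -/
def bFac (N K : ℕ) (β h t : ℝ) (q : ℕ → ℝ) (Jc : Fin N → Fin N → ℝ)
    (Js : Fin K → Fin N → ℝ) (σ : Fin N → Bool) : ℝ :=
  Real.exp (β * Real.sqrt (t / N) *
        ∑ i, ∑ j, (if i < j then Jc i j * spin (σ i) * spin (σ j) else 0)
      + β * h * ∑ i, spin (σ i)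
      + β * Real.sqrt (1 - t) *
          ∑ a : Fin K, Real.sqrt (q (a.val + 1) - q a.val) * ∑ i, Js a i * spin (σ i))

/-- The interpolating partition function `Z̃_N(β, h; t; x; J)`. -/
def Ztil (N K : ℕ) (β h t : ℝ) (q : ℕ → ℝ) (Jc : Fin N → Fin N → ℝ)
    (Js : Fin K → Fin N → ℝ) : ℝ :=
  ∑ σ : Fin N → Bool, bFac N K β h t q Jc Js σ

/-- `Wrec … j` is the random variable `Z_{K-j}`:  `Z_K = Z̃_N` and
`Z_{a-1} = (E_a (Z_a^{m_a}))^{1/m_a}`, where `E_a` integrates the Gaussian row `J^a`. -/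
def Wrec (N K : ℕ) (β h t : ℝ) (q m : ℕ → ℝ) :
    ℕ → (Fin N → Fin N → ℝ) → (Fin K → Fin N → ℝ) → ℝ
  | 0 => Ztil N K β h t q
  | j + 1 => fun Jc Js =>
      if hj : j < K then
        (∫ g : Fin N → ℝ,
            (Wrec N K β h t q m j Jc (Function.update Js ⟨K - 1 - j, by omega⟩ g)) ^ m (K - j)
          ∂gaussN N) ^ (m (K - j))⁻¹
      else Wrec N K β h t q m j Jc Js

/-- `Zrec … a` is the random variable `Z_a` of the broken replica interpolation. -/
def Zrec (N K : ℕ) (β h t : ℝ) (q m : ℕ → ℝ) (a : ℕ) :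
    (Fin N → Fin N → ℝ) → (Fin K → Fin N → ℝ) → ℝ :=
  Wrec N K β h t q m (K - a)

/-- The interpolating auxiliary function `α̃_N(t) = N⁻¹ E₀ log Z₀`. -/
def atilde (N K : ℕ) (β h : ℝ) (q m : ℕ → ℝ) (t : ℝ) : ℝ :=
  (N : ℝ)⁻¹ * ∫ Jc, Real.log (Wrec N K β h t q m K Jc 0) ∂gaussC N

/-- The normalized weight `f_a = Z_a^{m_a} / E_a(Z_a^{m_a}) = Z_a^{m_a} / Z_{a-1}^{m_a}`. -/
def fWeight (N K : ℕ) (β h t : ℝ) (q m : ℕ → ℝ) (a : ℕ) (Jc : Fin N → Fin N → ℝ)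
    (Js : Fin K → Fin N → ℝ) : ℝ :=
  Zrec N K β h t q m a Jc Js ^ m a / Zrec N K β h t q m (a - 1) Jc Js ^ m a

/-- The Gibbs expectation `ω(A)` of the interpolating Boltzmann factor. -/
def gibbs (N K : ℕ) (β h t : ℝ) (q : ℕ → ℝ) (A : (Fin N → Bool) → ℝ)
    (Jc : Fin N → Fin N → ℝ) (Js : Fin K → Fin N → ℝ) : ℝ :=
  (∑ σ : Fin N → Bool, A σ * bFac N K β h t q Jc Js σ) / Ztil N K β h t q Jc Js

/-- The two-replica Gibbs product expectation `Ω(A)`. -/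
def gibbs2 (N K : ℕ) (β h t : ℝ) (q : ℕ → ℝ) (A : (Fin N → Bool) → (Fin N → Bool) → ℝ)
    (Jc : Fin N → Fin N → ℝ) (Js : Fin K → Fin N → ℝ) : ℝ :=
  (∑ σ : Fin N → Bool, ∑ τ : Fin N → Bool,
      A σ τ * bFac N K β h t q Jc Js σ * bFac N K β h t q Jc Js τ) /
    Ztil N K β h t q Jc Js ^ 2

/-- `omT1 … A j` is the partially averaged state `ω̃_{K-j}(A)`:
`ω̃_K = ω` and `ω̃_{a-1}(·) = E_a (f_a ω̃_a(·))`. -/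
def omT1 (N K : ℕ) (β h t : ℝ) (q m : ℕ → ℝ) (A : (Fin N → Bool) → ℝ) :
    ℕ → (Fin N → Fin N → ℝ) → (Fin K → Fin N → ℝ) → ℝ
  | 0 => gibbs N K β h t q A
  | j + 1 => fun Jc Js =>
      if hj : j < K then
        ∫ g : Fin N → ℝ,
          fWeight N K β h t q m (K - j) Jc (Function.update Js ⟨K - 1 - j, by omega⟩ g) *
            omT1 N K β h t q m A j Jc (Function.update Js ⟨K - 1 - j, by omega⟩ g)
          ∂gaussN N
      else omT1 N K β h t q m A j Jc Js

/-- `omT2 … A j` is the partially averaged two-replica state `Ω̃_{K-j}(A)`: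
`Ω̃_K = Ω` and `Ω̃_{a-1}(·) = E_a (f_a Ω̃_a(·))`. -/
def omT2 (N K : ℕ) (β h t : ℝ) (q m : ℕ → ℝ) (A : (Fin N → Bool) → (Fin N → Bool) → ℝ) :
    ℕ → (Fin N → Fin N → ℝ) → (Fin K → Fin N → ℝ) → ℝ
  | 0 => gibbs2 N K β h t q A
  | j + 1 => fun Jc Js =>
      if hj : j < K then
        ∫ g : Fin N → ℝ,
          fWeight N K β h t q m (K - j) Jc (Function.update Js ⟨K - 1 - j, by omega⟩ g) *
            omT2 N K β h t q m A j Jc (Function.update Js ⟨K - 1 - j, by omega⟩ g)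
          ∂gaussN N
      else omT2 N K β h t q m A j Jc Js

/-- The deformed quenched average `⟨A⟩_a = E(f_1 ⋯ f_a Ω̃_a(A))` at interpolation
parameter `t`, for a function `A` of two replicas. -/
def angA (N K : ℕ) (β h t : ℝ) (q m : ℕ → ℝ) (a : ℕ)
    (A : (Fin N → Bool) → (Fin N → Bool) → ℝ) : ℝ :=
  ∫ Jc, ∫ Js,
      (∏ b ∈ Finset.Icc 1 a, fWeight N K β h t q m b Jc Js) *
        omT2 N K β h t q m A (K - a) Jc Js
    ∂gaussS K N ∂gaussC N

/-! ## Zero temperature (ground state) objects -/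

/-- The zero-temperature Parisi recursion: `parisiLevelBar K q m j` is `f̄(q_{K-j}, ·; x̄)`,
with final condition `f̄(q_K, y) = |y|`. -/
def parisiLevelBar (K : ℕ) (q m : ℕ → ℝ) : ℕ → ℝ → ℝ
  | 0 => fun y => |y|
  | j + 1 => pStep (m (K - j)) (q (K - j) - q (K - j - 1)) (parisiLevelBar K q m j)

/-- A zero-temperature piecewise constant order parameter: nodes
`0 = q_0 ≤ … ≤ q_K = 1` and nondecreasing values `0 ≤ m̄_1 ≤ … ≤ m̄_K`
(no upper bound `1`), with the convention `m̄_0 = 0`. -/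
structure ZeroTParam where
  K : ℕ
  hK : 1 ≤ K
  q : ℕ → ℝ
  m : ℕ → ℝ
  hq0 : q 0 = 0
  hqK : q K = 1
  hq_mono : ∀ a, a < K → q a ≤ q (a + 1)
  hm0 : m 0 = 0
  hm1 : 0 ≤ m 1
  hm_mono : ∀ a, 1 ≤ a → a < K → m a ≤ m (a + 1)

/-- The zero-temperature trial function `α̃(h; x̄) = f̄(0, h; x̄) - (1/2) ∫₀¹ r x̄(r) dr`. -/
def gsTrial (K : ℕ) (q m : ℕ → ℝ) (h : ℝ) : ℝ :=
  parisiLevelBar K q m K h - 1 / 2 * ∫ r in (0 : ℝ)..1, r * xFun K q m r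

/-! ## The p-spin model -/

/-- A piecewise constant functional order parameter on `[0, p/2]`:
`0 = q_0 ≤ … ≤ q_K = p/2` and `0 ≤ m_1 ≤ … ≤ m_K ≤ 1`. -/
structure POrderParam (p : ℕ) where
  K : ℕ
  hK : 1 ≤ K
  q : ℕ → ℝ
  m : ℕ → ℝ
  hq0 : q 0 = 0
  hqK : q K = p / 2
  hq_mono : ∀ a, a < K → q a ≤ q (a + 1)
  hm1 : 0 ≤ m 1
  hm_mono : ∀ a, 1 ≤ a → a < K → m a ≤ m (a + 1)
  hmK : m K ≤ 1

/-- The p-spin Hamiltonian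
`H_N(σ,h,J) = -(p!/(2N^{p-1}))^{1/2} ∑_{i_1<…<i_p} J_{i_1…i_p} σ_{i_1}⋯σ_{i_p} - h ∑_i σ_i`. -/
def hamP (p N : ℕ) (h : ℝ) (J : Finset (Fin N) → ℝ) (σ : Fin N → Bool) : ℝ :=
  -Real.sqrt ((Nat.factorial p : ℝ) / (2 * (N : ℝ) ^ (p - 1))) *
      ∑ S ∈ Finset.powersetCard p (Finset.univ : Finset (Fin N)), J S * ∏ i ∈ S, spin (σ i)
    - h * ∑ i, spin (σ i)

/-- The p-spin partition function. -/
def ZP (p N : ℕ) (β h : ℝ) (J : Finset (Fin N) → ℝ) : ℝ :=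
  ∑ σ : Fin N → Bool, Real.exp (-(β * hamP p N h J σ))

/-- The p-spin quenched average `N⁻¹ E log Z_N^{(p)}(β, h, J)`. -/
def quenchedFEP (p N : ℕ) (β h : ℝ) : ℝ :=
  (N : ℝ)⁻¹ * ∫ J, Real.log (ZP p N β h J) ∂gaussP N

/-- The functional order parameter on `[0, p/2]` as a function. -/
def xFunP (p K : ℕ) (q m : ℕ → ℝ) (r : ℝ) : ℝ :=
  if (p : ℝ) / 2 ≤ r then m K else m (sInf {a : ℕ | r < q a})

/-- The change of variables `q̄(r)` defined by `2r = p q̄^{p-1}`. -/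
def qBar (p : ℕ) (r : ℝ) : ℝ := (2 * r / p) ^ (((p : ℝ) - 1)⁻¹)

/-- The p-spin trial function
`ᾱ_p(β, h; x) = log 2 + f(0, h; x, β) - (β²/2) ∫₀^{p/2} q̄(r) x(r) dr`. -/
def trialAlphaP (p K : ℕ) (q m : ℕ → ℝ) (β h : ℝ) : ℝ :=
  Real.log 2 + parisiLevel K q m β K h
    - β ^ 2 / 2 * ∫ r in (0 : ℝ)..((p : ℝ) / 2), qBar p r * xFunP p K q m r

/-!
Couplings and one-body Gaussian fields are switched on and off together along a quarter circle:
at angle `θ` the couplings carry the weight `sin θ` and the fields `cos θ`, so that the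
`θ`-derivative of both variances is a multiple of `sin θ cos θ`. Averaging the log partition
function over the fields one level at a time, by cumulant averages `m⁻¹ log E exp(m F)`,
reproduces the Parisi recursion at `θ = 0`.

All levels satisfy one differential inequality,
`∂_θ F + sin θ cos θ ∑ M_{στ} (∂_σ ∂_τ F + m ∂_σ F ∂_τ F) ≤ c sin θ cos θ`,
in which the gradient of `F` is a probability vector. For log-sum-exp and `m = 1` the left side
only sees the diagonal of `M`. By Gaussian integration by parts a cumulant average adds or
removes the covariance of its field from `M`, and lowering `m` to `m'` costs `(m - m') κ` in `c`
whenever all entries of `M` are at least `-κ`. With `M_{στ}` close to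
`(β² / 2) N (r ^ p - 2 q r)` at overlap `r` and level `q`, the best `κ` is the tangent-line
bound of the convex function `r ^ p` at `r = q̄(q)`; this is where `p` even enters, and the costs
add up to the integral of `q̄ x`. A last average over the couplings leaves `M = 0`, and
integrating over `θ` compares the two ends.
-/

/-! ## Functions of exponential growth -/

section LinearGrowth

variable {E Y : Type*} [NormedAddCommGroup E]

/-- At most linear growth at infinity. -/
def HasLinearGrowth [Norm Y] (G : E → Y) : Prop :=
  ∃ A : ℝ, 0 ≤ A ∧ ∀ e, ‖G e‖ ≤ A * (1 + ‖e‖)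

/-- A positive function that decays at most exponentially at infinity. -/
def HasExpLowerBound (V : E → ℝ) : Prop :=
  ∃ A : ℝ, 0 ≤ A ∧ ∀ e, Real.exp (-(A * (1 + ‖e‖))) ≤ V e

theorem HasExpLowerBound.pos {V : E → ℝ} (hV : HasExpLowerBound V) (e : E) : 0 < V e := by
  obtain ⟨A, -, hA⟩ := hV
  exact (Real.exp_pos _).trans_le (hA e)

theorem HasLinearGrowth.const_mul {f : E → ℝ} (hf : HasLinearGrowth f) (c : ℝ) :
    HasLinearGrowth (fun e => c * f e) := by
  obtain ⟨A, hA, h⟩ := hf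
  refine ⟨|c| * A, by positivity, fun e => ?_⟩
  rw [norm_mul, Real.norm_eq_abs, mul_assoc]
  gcongr
  exact h e

theorem HasLinearGrowth.hasExpLowerBound_exp {f : E → ℝ} (hf : HasLinearGrowth f) :
    HasExpLowerBound (fun e => Real.exp (f e)) := by
  obtain ⟨A, hA, h⟩ := hf
  exact ⟨A, hA, fun e => Real.exp_le_exp.2 (neg_le_of_abs_le (h e))⟩

variable {D : Type*} [NormedAddCommGroup D]

theorem norm_comp_add_one_le {g : D → E} {B : ℝ} (hg : ∀ d, ‖g d‖ ≤ B * (1 + ‖d‖)) (d : D) :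
    1 + ‖g d‖ ≤ (1 + B) * (1 + ‖d‖) := by
  linarith [hg d, norm_nonneg d]

theorem HasLinearGrowth.comp [Norm Y] {f : E → Y} {g : D → E} (hf : HasLinearGrowth f)
    (hg : HasLinearGrowth g) : HasLinearGrowth (fun d => f (g d)) := by
  obtain ⟨A, hA, hf⟩ := hf
  obtain ⟨B, hB, hg⟩ := hg
  refine ⟨A * (1 + B), by positivity, fun d => (hf (g d)).trans ?_⟩
  rw [mul_assoc]
  gcongr
  exact norm_comp_add_one_le hg d

theorem HasExpLowerBound.comp {V : E → ℝ} {g : D → E} (hV : HasExpLowerBound V)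
    (hg : HasLinearGrowth g) : HasExpLowerBound (fun d => V (g d)) := by
  obtain ⟨A, hA, hV⟩ := hV
  obtain ⟨B, hB, hg⟩ := hg
  refine ⟨A * (1 + B), by positivity, fun d => le_trans ?_ (hV (g d))⟩
  rw [mul_assoc]
  gcongr
  exact norm_comp_add_one_le hg d

end LinearGrowth

section Growth

variable {D E Y Y₁ Y₂ : Type*}
  [NormedAddCommGroup D] [NormedSpace ℝ D] [NormedAddCommGroup E] [NormedSpace ℝ E]
  [NormedAddCommGroup Y] [NormedSpace ℝ Y] [NormedAddCommGroup Y₁] [NormedSpace ℝ Y₁]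
  [NormedAddCommGroup Y₂] [NormedSpace ℝ Y₂] {n : ℕ}

/-- `G` is `n` times continuously differentiable and its derivatives up to order `n` grow at most
exponentially. The analogue, for Gaussian integrals, of `Function.HasTemperateGrowth`. -/
def HasExpGrowth (n : ℕ) (G : E → Y) : Prop :=
  ContDiff ℝ n G ∧ ∃ A : ℝ, 0 ≤ A ∧
    ∀ k ≤ n, ∀ e, ‖iteratedFDeriv ℝ k G e‖ ≤ Real.exp (A * (1 + ‖e‖))

namespace HasExpGrowth

theorem of_le_mul_exp {G : E → Y} (hG : ContDiff ℝ n G) {C A : ℝ} (hC : 0 ≤ C) (hA : 0 ≤ A)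
    (h : ∀ k ≤ n, ∀ e, ‖iteratedFDeriv ℝ k G e‖ ≤ C * Real.exp (A * (1 + ‖e‖))) :
    HasExpGrowth n G := by
  refine ⟨hG, C + A, by positivity, fun k hk e => (h k hk e).trans ?_⟩
  have hCexp : C ≤ Real.exp (C * (1 + ‖e‖)) := by
    nlinarith [Real.add_one_le_exp (C * (1 + ‖e‖)), mul_nonneg hC (norm_nonneg e)]
  calc C * Real.exp (A * (1 + ‖e‖))
      ≤ Real.exp (C * (1 + ‖e‖)) * Real.exp (A * (1 + ‖e‖)) := by gcongr
    _ = Real.exp ((C + A) * (1 + ‖e‖)) := by rw [← Real.exp_add, add_mul]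

theorem zero_iff {G : E → Y} : HasExpGrowth 0 G ↔
    Continuous G ∧ ∃ A : ℝ, 0 ≤ A ∧ ∀ e, ‖G e‖ ≤ Real.exp (A * (1 + ‖e‖)) := by
  simp [HasExpGrowth]

theorem of_le {m : ℕ} {G : E → Y} (hG : HasExpGrowth n G) (hmn : m ≤ n) : HasExpGrowth m G := by
  obtain ⟨hG, A, hA, h⟩ := hG
  exact ⟨hG.of_le (mod_cast hmn), A, hA, fun k hk => h k (hk.trans hmn)⟩

theorem continuous {G : E → Y} (hG : HasExpGrowth n G) : Continuous G := hG.1.continuous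

theorem differentiable {G : E → Y} (hG : HasExpGrowth (n + 1) G) : Differentiable ℝ G :=
  hG.1.differentiable (by simp)

theorem succ_iff {G : E → Y} : HasExpGrowth (n + 1) G ↔
    HasExpGrowth 0 G ∧ Differentiable ℝ G ∧ HasExpGrowth n (fderiv ℝ G) := by
  constructor
  · intro hG
    refine ⟨hG.of_le (Nat.zero_le _), hG.differentiable, ?_⟩
    obtain ⟨hG, A, hA, h⟩ := hG
    refine ⟨hG.fderiv_right (by norm_cast), A, hA, fun k hk e => ?_⟩
    rw [norm_iteratedFDeriv_fderiv]
    exact h (k + 1) (by lia) e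
  · rintro ⟨⟨-, A, hA, h₀⟩, hG, hG', A', hA', h'⟩
    refine ⟨contDiff_succ_iff_fderiv.2 ⟨hG, by simp, hG'⟩, A + A', by positivity,
      fun k hk e => ?_⟩
    rcases k with _ | k
    · refine (h₀ 0 le_rfl e).trans ?_
      gcongr
      linarith
    · rw [← norm_iteratedFDeriv_fderiv]
      refine (h' k (by lia) e).trans ?_
      gcongr
      linarith

theorem fderiv {G : E → Y} (hG : HasExpGrowth (n + 1) G) : HasExpGrowth n (fderiv ℝ G) :=
  (succ_iff.1 hG).2.2

theorem add {f g : E → Y} (hf : HasExpGrowth n f) (hg : HasExpGrowth n g) :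
    HasExpGrowth n (fun e => f e + g e) := by
  obtain ⟨hf, A, hA, hf'⟩ := hf
  obtain ⟨hg, B, hB, hg'⟩ := hg
  refine of_le_mul_exp (C := 2) (A := A + B) (hf.add hg) zero_le_two (by positivity)
    fun k hk e => ?_
  have hkn : (k : WithTop ℕ∞) ≤ n := mod_cast hk
  rw [fun_iteratedFDeriv_add_apply (hf.of_le hkn).contDiffAt (hg.of_le hkn).contDiffAt]
  calc ‖iteratedFDeriv ℝ k f e + iteratedFDeriv ℝ k g e‖
      ≤ Real.exp (A * (1 + ‖e‖)) + Real.exp (B * (1 + ‖e‖)) :=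
        norm_add_le_of_le (hf' k hk e) (hg' k hk e)
    _ ≤ Real.exp ((A + B) * (1 + ‖e‖)) + Real.exp ((A + B) * (1 + ‖e‖)) := by
        gcongr <;> linarith
    _ = 2 * Real.exp ((A + B) * (1 + ‖e‖)) := by ring

theorem sum {ι : Type*} {s : Finset ι} {f : ι → E → Y} (hf : ∀ i ∈ s, HasExpGrowth n (f i)) :
    HasExpGrowth n (fun e => ∑ i ∈ s, f i e) := by
  classical
  induction s using Finset.induction_on with
  | empty =>
    refine of_le_mul_exp (C := 0) (A := 0) contDiff_const le_rfl le_rfl fun k _ e => ?_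
    simp [show (fun _ : E => (0 : Y)) = 0 from rfl]
  | insert i s hi ih =>
    simp only [Finset.sum_insert hi]
    exact (hf i (Finset.mem_insert_self i s)).add
      (ih fun j hj => hf j (Finset.mem_insert_of_mem hj))

theorem bilin (B : Y₁ →L[ℝ] Y₂ →L[ℝ] Y) {f : E → Y₁} {g : E → Y₂} (hf : HasExpGrowth n f)
    (hg : HasExpGrowth n g) : HasExpGrowth n (fun e => B (f e) (g e)) := by
  obtain ⟨hf, A, hA, hf'⟩ := hf
  obtain ⟨hg, A', hA', hg'⟩ := hg
  refine of_le_mul_exp (C := ‖B‖ * 2 ^ n) (A := A + A') (by fun_prop) (by positivity)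
    (by positivity) fun k hk e => ?_
  calc ‖iteratedFDeriv ℝ k (fun e => B (f e) (g e)) e‖
      ≤ ‖B‖ * ∑ i ∈ Finset.range (k + 1), (k.choose i : ℝ) *
          ‖iteratedFDeriv ℝ i f e‖ * ‖iteratedFDeriv ℝ (k - i) g e‖ :=
        B.norm_iteratedFDeriv_le_of_bilinear hf hg e (mod_cast hk)
    _ ≤ ‖B‖ * ∑ i ∈ Finset.range (k + 1), (k.choose i : ℝ) *
          Real.exp (A * (1 + ‖e‖)) * Real.exp (A' * (1 + ‖e‖)) := by
        gcongr with i hi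
        · exact hf' i (by grind) e
        · exact hg' (k - i) (by grind) e
    _ = ‖B‖ * 2 ^ k * Real.exp ((A + A') * (1 + ‖e‖)) := by
        rw [add_mul, Real.exp_add, ← Finset.sum_mul, ← Finset.sum_mul, ← Nat.cast_sum,
          Nat.sum_range_choose]
        push_cast
        ring
    _ ≤ ‖B‖ * 2 ^ n * Real.exp ((A + A') * (1 + ‖e‖)) := by gcongr; norm_num

theorem smul {f : E → ℝ} {g : E → Y} (hf : HasExpGrowth n f) (hg : HasExpGrowth n g) :
    HasExpGrowth n (fun e => f e • g e) :=
  bilin (ContinuousLinearMap.lsmul ℝ ℝ) hf hg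

theorem mul {f g : E → ℝ} (hf : HasExpGrowth n f) (hg : HasExpGrowth n g) :
    HasExpGrowth n (fun e => f e * g e) :=
  smul hf hg

theorem const (y : Y) : HasExpGrowth n (fun _ : E => y) := by
  refine of_le_mul_exp (C := ‖y‖) (A := 0) contDiff_const (norm_nonneg y) le_rfl fun k _ e => ?_
  rcases eq_or_ne k 0 with rfl | hk
  · simp
  · simp [iteratedFDeriv_const_of_ne hk]

theorem const_mul {f : E → ℝ} (hf : HasExpGrowth n f) (c : ℝ) :
    HasExpGrowth n (fun e => c * f e) :=
  mul (const c) hf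

end HasExpGrowth

theorem HasLinearGrowth.hasExpGrowth {G : E → Y} (hG : HasLinearGrowth G) (hc : Continuous G) :
    HasExpGrowth 0 G := by
  obtain ⟨A, hA, h⟩ := hG
  refine HasExpGrowth.of_le_mul_exp (C := A) (A := 1) (contDiff_zero.2 hc) hA zero_le_one
    fun k hk e => ?_
  obtain rfl := Nat.le_zero.1 hk
  rw [norm_iteratedFDeriv_zero, one_mul]
  refine (h e).trans ?_
  gcongr
  linarith [Real.add_one_le_exp (1 + ‖e‖)]

theorem HasLinearGrowth.clm (L : E →L[ℝ] Y) : HasLinearGrowth L :=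
  ⟨‖L‖, norm_nonneg L, fun e => (L.le_opNorm e).trans (by gcongr; linarith)⟩

namespace HasExpGrowth

theorem clm (L : E →L[ℝ] Y) : HasExpGrowth n L := by
  have hL : HasExpGrowth 0 L := (HasLinearGrowth.clm L).hasExpGrowth L.continuous
  rcases n with _ | n
  · exact hL
  · refine succ_iff.2 ⟨hL, L.differentiable, ?_⟩
    rw [show _root_.fderiv ℝ L = fun _ => L from funext fun _ => L.fderiv]
    exact const L

theorem clm_apply {f : E → Y₁ →L[ℝ] Y} (hf : HasExpGrowth n f) (y : Y₁) :
    HasExpGrowth n (fun e => f e y) :=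
  bilin (ContinuousLinearMap.id ℝ (Y₁ →L[ℝ] Y)) hf (const y)

theorem comp {f : E → Y} {g : D → E} (hf : HasExpGrowth n f) (hg : HasExpGrowth n g)
    (hlin : HasLinearGrowth g) : HasExpGrowth n (fun e => f (g e)) := by
  obtain ⟨hf, A, hA, hf'⟩ := hf
  obtain ⟨hg, A', hA', hg'⟩ := hg
  obtain ⟨B, hB, hlin⟩ := hlin
  refine of_le_mul_exp (C := n.factorial) (A := A * (1 + B) + n * A') (hf.comp hg)
    (by positivity) (by positivity) fun k hk e => ?_
  have hD : 1 ≤ Real.exp (A' * (1 + ‖e‖)) := Real.one_le_exp (by positivity)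
  calc ‖iteratedFDeriv ℝ k (f ∘ g) e‖
      ≤ k.factorial * Real.exp (A * (1 + ‖g e‖)) * Real.exp (A' * (1 + ‖e‖)) ^ k :=
        norm_iteratedFDeriv_comp_le hf hg (mod_cast hk) e
          (fun i hi => hf' i (hi.trans hk) (g e)) fun i hi hik =>
            (hg' i (hik.trans hk) e).trans (le_self_pow₀ hD (by lia))
    _ ≤ n.factorial * Real.exp (A * ((1 + B) * (1 + ‖e‖))) *
          Real.exp (A' * (1 + ‖e‖)) ^ n := by
        gcongr
        exact norm_comp_add_one_le hlin e
    _ = n.factorial * Real.exp ((A * (1 + B) + n * A') * (1 + ‖e‖)) := by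
        rw [mul_assoc, ← Real.exp_nat_mul, ← Real.exp_add]
        ring_nf

theorem of_abs_iteratedDeriv_le {f : ℝ → ℝ} (hf : ContDiff ℝ n f)
    (h : ∀ k ≤ n, ∀ x, |iteratedDeriv k f x| ≤ Real.exp |x|) : HasExpGrowth n f := by
  refine ⟨hf, 1, zero_le_one, fun k hk x => ?_⟩
  rw [norm_iteratedFDeriv_eq_norm_iteratedDeriv]
  refine (h k hk x).trans (Real.exp_le_exp.2 ?_)
  rw [Real.norm_eq_abs]
  linarith

theorem cos : HasExpGrowth n Real.cos :=
  of_abs_iteratedDeriv_le Real.contDiff_cos fun k _ x =>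
    (Real.abs_iteratedDeriv_cos_le_one k x).trans (Real.one_le_exp (abs_nonneg x))

theorem sin : HasExpGrowth n Real.sin :=
  of_abs_iteratedDeriv_le Real.contDiff_sin fun k _ x =>
    (Real.abs_iteratedDeriv_sin_le_one k x).trans (Real.one_le_exp (abs_nonneg x))

theorem exp {f : E → ℝ} (hf : HasExpGrowth n f) (hlin : HasLinearGrowth f) :
    HasExpGrowth n (fun e => Real.exp (f e)) := by
  refine comp (of_abs_iteratedDeriv_le Real.contDiff_exp fun k _ x => ?_) hf hlin
  rw [iteratedDeriv_eq_iterate, Real.iter_deriv_exp, Real.abs_exp]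
  exact Real.exp_le_exp.2 (le_abs_self x)

end HasExpGrowth

theorem HasExpLowerBound.hasLinearGrowth_log {V : E → ℝ} (hlow : HasExpLowerBound V)
    (hV : HasExpGrowth 0 V) : HasLinearGrowth (fun e => Real.log (V e)) := by
  have hpos := hlow.pos
  obtain ⟨-, A, hA, hV⟩ := HasExpGrowth.zero_iff.1 hV
  obtain ⟨B, hB, hlow⟩ := hlow
  refine ⟨A + B, by positivity, fun e => ?_⟩
  have hupper : Real.log (V e) ≤ A * (1 + ‖e‖) :=
    (Real.log_le_iff_le_exp (hpos e)).2 ((le_abs_self _).trans (hV e))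
  have hlower : -(B * (1 + ‖e‖)) ≤ Real.log (V e) := (Real.le_log_iff_exp_le (hpos e)).2 (hlow e)
  have hA' : 0 ≤ A * (1 + ‖e‖) := by positivity
  have hB' : 0 ≤ B * (1 + ‖e‖) := by positivity
  rw [Real.norm_eq_abs, abs_le]
  constructor <;> linarith

theorem HasExpGrowth.log {V : E → ℝ} (hV : HasExpGrowth n V) (hlow : HasExpLowerBound V) :
    HasExpGrowth n (fun e => Real.log (V e)) := by
  have hne : ∀ e, V e ≠ 0 := fun e => (hlow.pos e).ne'
  have hlin := hlow.hasLinearGrowth_log (hV.of_le (Nat.zero_le n))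
  induction n with
  | zero => exact hlin.hasExpGrowth (hV.continuous.log hne)
  | succ n ih =>
    refine succ_iff.2 ⟨hlin.hasExpGrowth (hV.continuous.log hne), hV.differentiable.log hne, ?_⟩
    have hfderiv : _root_.fderiv ℝ (fun e => Real.log (V e)) =
        fun e => Real.exp (-1 * Real.log (V e)) • _root_.fderiv ℝ V e := by
      ext1 e
      rw [fderiv.log (hV.differentiable e) (hne e), neg_one_mul, Real.exp_neg,
        Real.exp_log (hlow.pos e)]
    rw [hfderiv]
    exact (((ih (hV.of_le n.le_succ)).const_mul (-1)).exp (hlin.const_mul (-1))).smul hV.fderiv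

end Growth

section ExpMoments

variable {Z : Type*} [NormedAddCommGroup Z] [MeasurableSpace Z] {μ : Measure Z}

/-- All exponential moments of the norm are finite. -/
def HasExpMoments (μ : Measure Z) : Prop :=
  ∀ A : ℝ, Integrable (fun z => Real.exp (A * ‖z‖)) μ

namespace HasExpMoments

theorem of_isGaussian [NormedSpace ℝ Z] [BorelSpace Z] [SecondCountableTopology Z]
    [CompleteSpace Z] (μ : Measure Z) [IsGaussian μ] : HasExpMoments μ := by
  intro A
  obtain ⟨C, hC, hint⟩ := IsGaussian.exists_integrable_exp_sq μ
  refine (hint.const_mul (Real.exp (A ^ 2 / (4 * C)))).mono' (by fun_prop)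
    (ae_of_all _ fun z => ?_)
  rw [Real.norm_eq_abs, Real.abs_exp, ← Real.exp_add]
  refine Real.exp_le_exp.2 ?_
  have hsq : A ^ 2 / (4 * C) + C * ‖z‖ ^ 2 - A * ‖z‖ = C * (A / (2 * C) - ‖z‖) ^ 2 := by
    field_simp
    ring
  linarith [mul_nonneg hC.le (sq_nonneg (A / (2 * C) - ‖z‖))]

theorem integrable_exp (hμ : HasExpMoments μ) (c A : ℝ) :
    Integrable (fun z => Real.exp (c + A * ‖z‖)) μ := by
  simpa only [Real.exp_add] using (hμ A).const_mul (Real.exp c)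

theorem integrable {Y : Type*} [NormedAddCommGroup Y] [NormedSpace ℝ Y] [NormedSpace ℝ Z]
    [BorelSpace Z] [SecondCountableTopology Z] {n : ℕ} (hμ : HasExpMoments μ) {G : Z → Y}
    (hG : HasExpGrowth n G) : Integrable G μ := by
  obtain ⟨-, A, -, h⟩ := HasExpGrowth.zero_iff.1 (hG.of_le n.zero_le)
  refine (hμ.integrable_exp A A).mono' hG.continuous.aestronglyMeasurable
    (ae_of_all _ fun z => (h z).trans_eq ?_)
  ring_nf

end HasExpMoments

end ExpMoments

section ParametricIntegral

universe u

variable {Z E Y : Type*} [NormedAddCommGroup Z] [NormedSpace ℝ Z] [MeasurableSpace Z]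
  [NormedAddCommGroup E] [NormedSpace ℝ E] [NormedAddCommGroup Y] [NormedSpace ℝ Y]
  {μ : Measure Z} {n : ℕ}

omit [NormedSpace ℝ Z] [MeasurableSpace Z] [NormedSpace ℝ E] in
theorem norm_prodMk_le (z : Z) (e : E) : ‖(z, e)‖ ≤ ‖z‖ + ‖e‖ :=
  max_le_add_of_nonneg (norm_nonneg z) (norm_nonneg e)

namespace HasExpGrowth

theorem exists_integrable_bound (hμ : HasExpMoments μ) {G : Z × E → Y} (hG : HasExpGrowth n G) :
    ∃ A : ℝ, 0 ≤ A ∧ Integrable (fun z => Real.exp (A * ‖z‖)) μ ∧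
      ∀ z e, ‖G (z, e)‖ ≤ Real.exp (A * (1 + ‖e‖)) * Real.exp (A * ‖z‖) := by
  obtain ⟨-, A, hA, h⟩ := zero_iff.1 (hG.of_le n.zero_le)
  refine ⟨A, hA, hμ A, fun z e => (h _).trans ?_⟩
  rw [← Real.exp_add, ← mul_add]
  refine Real.exp_le_exp.2 (mul_le_mul_of_nonneg_left ?_ hA)
  linarith [norm_prodMk_le z e]

theorem exists_integrable_bound_ball (hμ : HasExpMoments μ) {G : Z × E → Y}
    (hG : HasExpGrowth n G) (e₀ : E) : ∃ bound : Z → ℝ, Integrable bound μ ∧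
      ∀ z, ∀ e ∈ Metric.ball e₀ 1, ‖G (z, e)‖ ≤ bound z := by
  obtain ⟨A, hA, hint, h⟩ := hG.exists_integrable_bound hμ
  refine ⟨_, hint.const_mul (Real.exp (A * (1 + (‖e₀‖ + 1)))), fun z e he => (h z e).trans ?_⟩
  gcongr
  exact (norm_lt_of_mem_ball he).le

omit [MeasurableSpace Z] in
theorem comp_prodMk_left {G : Z × E → Y} (hG : HasExpGrowth n G) (e : E) :
    HasExpGrowth n (fun z => G (z, e)) := by
  refine hG.comp ?_ ⟨1 + ‖e‖, by positivity, fun z => ?_⟩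
  · simpa using (HasExpGrowth.clm (ContinuousLinearMap.inl ℝ Z E)).add (const (0, e))
  · have hnorm : ‖(z, e)‖ ≤ ‖z‖ + ‖e‖ := max_le_add_of_nonneg (norm_nonneg z) (norm_nonneg e)
    nlinarith [mul_nonneg (norm_nonneg z) (norm_nonneg e)]

variable [BorelSpace Z] [SecondCountableTopology Z]

theorem integrable_section (hμ : HasExpMoments μ) {G : Z × E → Y} (hG : HasExpGrowth n G)
    (e : E) : Integrable (fun z => G (z, e)) μ :=
  hμ.integrable (hG.comp_prodMk_left e)

theorem continuous_integral (hμ : HasExpMoments μ) {G : Z × E → Y} (hG : HasExpGrowth n G) :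
    Continuous (fun e => ∫ z, G (z, e) ∂μ) := by
  have hc := hG.continuous
  refine continuous_iff_continuousAt.2 fun e₀ => ?_
  obtain ⟨bound, hint, h⟩ := hG.exists_integrable_bound_ball hμ e₀
  refine continuousAt_of_dominated
    (Eventually.of_forall fun e => Continuous.aestronglyMeasurable (by fun_prop)) ?_ hint
    (ae_of_all _ fun z => by fun_prop)
  filter_upwards [Metric.ball_mem_nhds e₀ one_pos] with e he
  exact ae_of_all _ fun z => h z e he

theorem zero_integral (hμ : HasExpMoments μ) {G : Z × E → Y} (hG : HasExpGrowth n G) :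
    HasExpGrowth 0 (fun e => ∫ z, G (z, e) ∂μ) := by
  obtain ⟨A, hA, hint, h⟩ := hG.exists_integrable_bound hμ
  refine of_le_mul_exp (C := ∫ z, Real.exp (A * ‖z‖) ∂μ) (A := A)
    (contDiff_zero.2 (hG.continuous_integral hμ)) (integral_nonneg fun z => (Real.exp_pos _).le)
    hA fun k hk e => ?_
  obtain rfl := Nat.le_zero.1 hk
  rw [norm_iteratedFDeriv_zero, mul_comm, ← integral_const_mul]
  exact norm_integral_le_of_norm_le (hint.const_mul _) (ae_of_all _ fun z => h z e)

theorem hasFDerivAt_integral (hμ : HasExpMoments μ) {G : Z × E → Y} (hG : HasExpGrowth 1 G)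
    (e₀ : E) : HasFDerivAt (fun e => ∫ z, G (z, e) ∂μ)
      (∫ z, (_root_.fderiv ℝ G (z, e₀)).comp (ContinuousLinearMap.inr ℝ Z E) ∂μ) e₀ := by
  have hpartial : HasExpGrowth 0 (fun w : Z × E =>
      (_root_.fderiv ℝ G w).comp (ContinuousLinearMap.inr ℝ Z E)) :=
    bilin (ContinuousLinearMap.compL ℝ E (Z × E) Y) hG.fderiv (const _)
  obtain ⟨bound, hint, h⟩ := hpartial.exists_integrable_bound_ball hμ e₀
  refine hasFDerivAt_integral_of_dominated_of_fderiv_le (Metric.ball_mem_nhds e₀ one_pos)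
    (Eventually.of_forall fun e => (hG.integrable_section hμ e).aestronglyMeasurable)
    (hG.integrable_section hμ e₀) (hpartial.integrable_section hμ e₀).aestronglyMeasurable
    (ae_of_all _ h) hint (ae_of_all _ fun z e _ => ?_)
  exact (hG.differentiable (z, e)).hasFDerivAt.comp e (hasFDerivAt_prodMk_right z e)

theorem fderiv_integral_apply [CompleteSpace Y] (hμ : HasExpMoments μ) {G : Z × E → Y}
    (hG : HasExpGrowth 1 G) (e y : E) : _root_.fderiv ℝ (fun e => ∫ z, G (z, e) ∂μ) e y =
      ∫ z, _root_.fderiv ℝ G (z, e) (0, y) ∂μ := by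
  have hpartial : HasExpGrowth 0 (fun w : Z × E =>
      (_root_.fderiv ℝ G w).comp (ContinuousLinearMap.inr ℝ Z E)) :=
    bilin (ContinuousLinearMap.compL ℝ E (Z × E) Y) hG.fderiv (const _)
  rw [(hG.hasFDerivAt_integral hμ e).fderiv,
    ContinuousLinearMap.integral_apply (hpartial.integrable_section hμ e)]
  simp

theorem integral {E Y : Type u} [NormedAddCommGroup E] [NormedSpace ℝ E]
    [NormedAddCommGroup Y] [NormedSpace ℝ Y] (hμ : HasExpMoments μ) {G : Z × E → Y}
    (hG : HasExpGrowth n G) :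
    HasExpGrowth n (fun e => ∫ z, G (z, e) ∂μ) := by
  induction n generalizing Y with
  | zero => exact hG.zero_integral hμ
  | succ n ih =>
    have hderiv := hasFDerivAt_integral hμ (hG.of_le (Nat.le_add_left 1 n))
    refine succ_iff.2 ⟨hG.zero_integral hμ, fun e => (hderiv e).differentiableAt, ?_⟩
    rw [funext fun e => (hderiv e).fderiv]
    exact ih (bilin (ContinuousLinearMap.compL ℝ E (Z × E) Y) hG.fderiv (const _))

end HasExpGrowth

variable [BorelSpace Z] [SecondCountableTopology Z] [IsProbabilityMeasure μ]

omit [NormedSpace ℝ E] in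
theorem HasLinearGrowth.integral (hμ : HasExpMoments μ) {G : Z × E → Y} (hG : HasLinearGrowth G) :
    HasLinearGrowth (fun e => ∫ z, G (z, e) ∂μ) := by
  obtain ⟨A, hA, h⟩ := hG
  have hint : Integrable (fun z : Z => ‖z‖) μ :=
    (hμ.integrable (HasExpGrowth.clm (n := 0) (ContinuousLinearMap.id ℝ Z))).norm
  have hmean : 0 ≤ ∫ z, ‖z‖ ∂μ := integral_nonneg norm_nonneg
  refine ⟨A * (1 + ∫ z, ‖z‖ ∂μ), by positivity, fun e => ?_⟩
  calc ‖∫ z, G (z, e) ∂μ‖ ≤ ∫ z, (A * (1 + ‖e‖) + A * ‖z‖) ∂μ := by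
        refine norm_integral_le_of_norm_le ((integrable_const _).add (hint.const_mul A))
          (ae_of_all _ fun z => (h (z, e)).trans ?_)
        rw [← mul_add]
        refine mul_le_mul_of_nonneg_left ?_ hA
        linarith [norm_prodMk_le z e]
    _ = A * (1 + ‖e‖) + A * ∫ z, ‖z‖ ∂μ := by
        rw [integral_add (integrable_const _) (hint.const_mul A), integral_const, probReal_univ,
          one_smul, integral_const_mul]
    _ ≤ A * (1 + ∫ z, ‖z‖ ∂μ) * (1 + ‖e‖) := by
        rw [← mul_add, mul_assoc]
        gcongr
        nlinarith [norm_nonneg e]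

theorem HasExpLowerBound.integral (hμ : HasExpMoments μ) {V : Z × E → ℝ} (hV : HasExpGrowth n V)
    (hlow : HasExpLowerBound V) : HasExpLowerBound (fun e => ∫ z, V (z, e) ∂μ) := by
  obtain ⟨A, hA, h⟩ := hlow
  have hpos : 0 < ∫ z, Real.exp (-A * ‖z‖) ∂μ := integral_exp_pos (hμ _)
  set k := Real.log (∫ z, Real.exp (-A * ‖z‖) ∂μ)
  refine ⟨A + |k|, by positivity, fun e => ?_⟩
  calc Real.exp (-((A + |k|) * (1 + ‖e‖)))
      ≤ Real.exp (-(A * (1 + ‖e‖)) + k) := by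
        gcongr
        nlinarith [neg_abs_le k, mul_nonneg (abs_nonneg k) (norm_nonneg e)]
    _ = ∫ z, Real.exp (-(A * (1 + ‖e‖))) * Real.exp (-A * ‖z‖) ∂μ := by
        rw [Real.exp_add, Real.exp_log hpos, integral_const_mul]
    _ ≤ ∫ z, V (z, e) ∂μ := by
        refine integral_mono ((hμ _).const_mul _) (hV.integrable_section hμ e) fun z =>
          le_trans ?_ (h (z, e))
        dsimp only
        rw [← Real.exp_add]
        gcongr
        nlinarith [norm_prodMk_le z e]

end ParametricIntegral

/-! ## Gaussian integration by parts -/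

section GaussianStein

variable {X : Type*} [NormedAddCommGroup X] [NormedSpace ℝ X]

theorem rotation_eq_cos_add_sin (θ : ℝ) (w : X × X) :
    ContinuousLinearMap.rotation θ w = Real.cos θ • w + Real.sin θ • (w.2, -w.1) := by
  ext <;> simp [ContinuousLinearMap.rotation_apply, add_comm]

theorem HasExpGrowth.comp_rotation {n : ℕ} {g : X × X → ℝ} (hg : HasExpGrowth n g) :
    HasExpGrowth n (fun q : (X × X) × ℝ => g (ContinuousLinearMap.rotation q.2 q.1)) := by
  have hsnd (f : ℝ → ℝ) (hf : HasExpGrowth n f) :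
      HasExpGrowth n (fun q : (X × X) × ℝ => f q.2) :=
    hf.comp (.clm (.snd ℝ (X × X) ℝ)) (.clm (.snd ℝ (X × X) ℝ))
  let J : X × X →L[ℝ] X × X :=
    (ContinuousLinearMap.snd ℝ X X).prod (-ContinuousLinearMap.fst ℝ X X)
  have hrot (q : (X × X) × ℝ) : ContinuousLinearMap.rotation q.2 q.1 =
      Real.cos q.2 • q.1 + Real.sin q.2 • J q.1 := rotation_eq_cos_add_sin q.2 q.1
  refine hg.comp ?_ ⟨2, zero_le_two, fun q => ?_⟩
  · simp only [hrot]
    exact ((hsnd _ .cos).smul (.clm (.fst ℝ (X × X) ℝ))).add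
      ((hsnd _ .sin).smul (.clm (J.comp (.fst ℝ (X × X) ℝ))))
  · have hJ : ‖J q.1‖ = ‖q.1‖ := by simp [J, Prod.norm_def, max_comm]
    calc ‖ContinuousLinearMap.rotation q.2 q.1‖
        ≤ |Real.cos q.2| * ‖q.1‖ + |Real.sin q.2| * ‖J q.1‖ := by
          rw [hrot, ← Real.norm_eq_abs, ← Real.norm_eq_abs, ← norm_smul, ← norm_smul]
          exact norm_add_le _ _
      _ ≤ 1 * ‖q.1‖ + 1 * ‖q.1‖ := by
          rw [hJ]
          gcongr
          exacts [Real.abs_cos_le_one _, Real.abs_sin_le_one _]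
      _ ≤ 2 * (1 + ‖q‖) := by linarith [norm_fst_le q]

theorem hasDerivAt_rotation_zero (w : X × X) :
    HasDerivAt (fun θ : ℝ => ContinuousLinearMap.rotation θ w) (w.2, -w.1) 0 := by
  simp only [rotation_eq_cos_add_sin]
  exact (((Real.hasDerivAt_cos 0).smul_const w).add
    ((Real.hasDerivAt_sin 0).smul_const (w.2, -w.1))).congr_deriv (by simp)

variable [MeasurableSpace X] [BorelSpace X] [SecondCountableTopology X] [CompleteSpace X]
  {μ : Measure X} [IsGaussian μ]

theorem integral_fderiv_rotation_eq_zero (hμ : μ[id] = 0) {g : X × X → ℝ}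
    (hg : HasExpGrowth 1 g) : ∫ w, fderiv ℝ g w (w.2, -w.1) ∂(μ.prod μ) = 0 := by
  have hG := hg.comp_rotation
  have hmoments := HasExpMoments.of_isGaussian (μ.prod μ)
  have hconst (θ : ℝ) : ∫ w, g (ContinuousLinearMap.rotation θ w) ∂(μ.prod μ) =
      ∫ w, g w ∂(μ.prod μ) := by
    conv_rhs => rw [← IsGaussian.map_rotation_eq_self hμ θ]
    rw [integral_map (by fun_prop) hg.continuous.aestronglyMeasurable]
  have hzero := hG.fderiv_integral_apply hmoments 0 1
  simp only [hconst, fderiv_fun_const, Pi.zero_apply, zero_apply] at hzero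
  rw [hzero]
  refine integral_congr_ae (ae_of_all _ fun w => ?_)
  have hangle := (hG.differentiable (w, 0)).hasFDerivAt.comp_hasDerivAt (0 : ℝ)
    ((hasDerivAt_const (0 : ℝ) w).prodMk (hasDerivAt_id (0 : ℝ)))
  have hchain := (hg.differentiable (ContinuousLinearMap.rotation 0 w)).hasFDerivAt.comp_hasDerivAt
    (0 : ℝ) (hasDerivAt_rotation_zero w)
  simpa [rotation_eq_cos_add_sin] using hchain.unique hangle

theorem integral_mul_eq_integral_fderiv (hμ : μ[id] = 0) (L : X →L[ℝ] ℝ) {f : X → ℝ}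
    (hf : HasExpGrowth 1 f) :
    ∫ x, L x * f x ∂μ = ∫ x, ∫ y, L y * fderiv ℝ f x y ∂μ ∂μ := by
  have hL : HasExpGrowth 1 (fun w : X × X => L w.2) := .clm (L.comp (.snd ℝ X X))
  have hf' : HasExpGrowth 1 (fun w : X × X => f w.1) :=
    hf.comp (.clm (.fst ℝ X X)) (.clm (.fst ℝ X X))
  have hfst : HasExpGrowth 0 (fun w : X × X => fderiv ℝ f w.1) :=
    hf.fderiv.comp (.clm (.fst ℝ X X)) (.clm (.fst ℝ X X))
  have hderiv (w : X × X) : fderiv ℝ (fun w : X × X => L w.2 * f w.1) w (w.2, -w.1) =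
      L w.2 * fderiv ℝ f w.1 w.2 - L w.1 * f w.1 := by
    have h : HasFDerivAt (fun w : X × X => L w.2 * f w.1) _ w :=
      ((L.comp (.snd ℝ X X)).hasFDerivAt (x := w)).mul
        ((hf.differentiable w.1).hasFDerivAt.comp w (hasFDerivAt_fst (𝕜 := ℝ)))
    rw [h.fderiv]
    simp
    ring
  have hmoments := HasExpMoments.of_isGaussian (μ.prod μ)
  have hint₁ : Integrable (fun w : X × X => L w.2 * fderiv ℝ f w.1 w.2) (μ.prod μ) :=
    hmoments.integrable ((hL.of_le (Nat.zero_le 1)).mul (.bilin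
      (ContinuousLinearMap.id ℝ (X →L[ℝ] ℝ)) hfst (.clm (.snd ℝ X X))))
  have hint₂ : Integrable (fun w : X × X => L w.1 * f w.1) (μ.prod μ) :=
    hmoments.integrable ((HasExpGrowth.clm (L.comp (.fst ℝ X X))).mul hf')
  have hzero := integral_fderiv_rotation_eq_zero hμ (hL.mul hf')
  simp only [hderiv] at hzero
  rw [integral_sub hint₁ hint₂, sub_eq_zero, integral_prod _ hint₁, integral_prod _ hint₂] at hzero
  simpa using hzero.symm

end GaussianStein

section InterpolatedAverage

variable {ι : Type}

/-- A smooth bounded amplitude `ρ` for a Gaussian field, as a function of the interpolation angle,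
whose variance `ρ²` evolves at rate `2 s sin θ cos θ`. -/
structure IsAmplitude (s : ℝ) (ρ : ℝ → ℝ) : Prop where
  hasExpGrowth (n : ℕ) : HasExpGrowth n ρ
  abs_le_one (θ : ℝ) : |ρ θ| ≤ 1
  mul_deriv (θ : ℝ) : ρ θ * deriv ρ θ = s * (Real.sin θ * Real.cos θ)

theorem IsAmplitude.sin : IsAmplitude 1 Real.sin where
  hasExpGrowth _ := .sin
  abs_le_one := Real.abs_sin_le_one
  mul_deriv θ := by rw [Real.deriv_sin, one_mul]

theorem IsAmplitude.cos : IsAmplitude (-1) Real.cos where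
  hasExpGrowth _ := .cos
  abs_le_one := Real.abs_cos_le_one
  mul_deriv θ := by rw [Real.deriv_cos]; ring

/-- Translation of the fields by `ρ(θ) x` at angle `θ`; a point `e` consists of the angle `e.1` and
the fields `e.2`. -/
def fieldShift (ρ : ℝ → ℝ) (w : (ι → ℝ) × (ℝ × (ι → ℝ))) : ℝ × (ι → ℝ) :=
  w.2 + ρ w.2.1 • (0, w.1)

/-- The average of `V` over the random field `ρ(θ) x` with `x` distributed according to `μ`. -/
def fieldAvg (ρ : ℝ → ℝ) (μ : Measure (ι → ℝ)) (V : ℝ × (ι → ℝ) → ℝ) (e : ℝ × (ι → ℝ)) : ℝ :=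
  ∫ x, V (fieldShift ρ (x, e)) ∂μ

@[simp]
theorem fieldShift_fst (ρ : ℝ → ℝ) (x : ι → ℝ) (e : ℝ × (ι → ℝ)) :
    (fieldShift ρ (x, e)).1 = e.1 := by
  simp [fieldShift]

section Amplitude

variable [Fintype ι] {s : ℝ} {ρ : ℝ → ℝ} (hρ : IsAmplitude s ρ)
include hρ

theorem IsAmplitude.norm_fieldShift_le (x : ι → ℝ) (e : ℝ × (ι → ℝ)) :
    ‖fieldShift ρ (x, e)‖ ≤ ‖e‖ + ‖x‖ := by
  have hx : ‖((0 : ℝ), x)‖ = ‖x‖ := by simp [Prod.norm_def]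
  calc ‖fieldShift ρ (x, e)‖ ≤ ‖e‖ + |ρ e.1| * ‖x‖ := by
        rw [← Real.norm_eq_abs, ← hx, ← norm_smul]
        exact norm_add_le _ _
    _ ≤ ‖e‖ + 1 * ‖x‖ := by gcongr; exact hρ.abs_le_one _
    _ = ‖e‖ + ‖x‖ := by rw [one_mul]

theorem IsAmplitude.hasLinearGrowth_fieldShift : HasLinearGrowth (fieldShift (ι := ι) ρ) :=
  ⟨2, zero_le_two, fun w => (hρ.norm_fieldShift_le w.1 w.2).trans
    (by linarith [norm_fst_le w, norm_snd_le w])⟩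

theorem IsAmplitude.hasExpGrowth_fieldShift (n : ℕ) : HasExpGrowth n (fieldShift (ι := ι) ρ) := by
  let angle : (ι → ℝ) × (ℝ × (ι → ℝ)) →L[ℝ] ℝ :=
    (ContinuousLinearMap.fst ℝ ℝ (ι → ℝ)).comp (.snd ℝ _ _)
  have hangle : HasExpGrowth n (fun w => ρ (angle w)) :=
    (hρ.hasExpGrowth n).comp (.clm angle) (.clm angle)
  exact (HasExpGrowth.clm (ContinuousLinearMap.snd ℝ _ _)).add (hangle.smul
    (.clm ((ContinuousLinearMap.inr ℝ ℝ (ι → ℝ)).comp (.fst ℝ _ _))))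

theorem IsAmplitude.hasExpGrowth_comp {Y : Type*} [NormedAddCommGroup Y] [NormedSpace ℝ Y] {n : ℕ}
    {V : ℝ × (ι → ℝ) → Y} (hV : HasExpGrowth n V) :
    HasExpGrowth n (fun w => V (fieldShift ρ w)) :=
  hV.comp (hρ.hasExpGrowth_fieldShift n) hρ.hasLinearGrowth_fieldShift

variable {μ : Measure (ι → ℝ)} (hμ : HasExpMoments μ)
include hμ

theorem IsAmplitude.integrable_comp {Y : Type*} [NormedAddCommGroup Y] [NormedSpace ℝ Y] {n : ℕ}
    {V : ℝ × (ι → ℝ) → Y} (hV : HasExpGrowth n V) (e : ℝ × (ι → ℝ)) :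
    Integrable (fun x => V (fieldShift ρ (x, e))) μ :=
  (hρ.hasExpGrowth_comp hV).integrable_section hμ e

theorem IsAmplitude.hasExpGrowth_fieldAvg {n : ℕ} {V : ℝ × (ι → ℝ) → ℝ} (hV : HasExpGrowth n V) :
    HasExpGrowth n (fieldAvg ρ μ V) :=
  (hρ.hasExpGrowth_comp hV).integral hμ

theorem IsAmplitude.fderiv_fieldAvg {V : ℝ × (ι → ℝ) → ℝ} (hV : HasExpGrowth 1 V)
    (e y : ℝ × (ι → ℝ)) : fderiv ℝ (fieldAvg ρ μ V) e y =
      ∫ x, fderiv ℝ V (fieldShift ρ (x, e)) (y + (deriv ρ e.1 * y.1) • (0, x)) ∂μ := by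
  have hG := hρ.hasExpGrowth_comp hV
  refine (hG.fderiv_integral_apply hμ e y).trans
    (integral_congr_ae (ae_of_all _ fun x => ?_))
  have hsection := (hG.differentiable (x, e)).hasFDerivAt.comp e (hasFDerivAt_prodMk_right x e)
  have hshift : HasFDerivAt (fun e => fieldShift ρ (x, e)) (ContinuousLinearMap.id ℝ _ +
      (deriv ρ e.1 • ContinuousLinearMap.fst ℝ ℝ (ι → ℝ)).smulRight ((0 : ℝ), x)) e :=
    (hasFDerivAt_id e).add ((((hρ.hasExpGrowth 1).differentiable e.1).hasDerivAt.comp_hasFDerivAt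
      (f := Prod.fst) e hasFDerivAt_fst).smul_const ((0 : ℝ), x))
  have hchain := (hV.differentiable (fieldShift ρ (x, e))).hasFDerivAt.comp e hshift
  simpa using congrArg (· y) (hsection.unique hchain)

end Amplitude

variable [Fintype ι]

/-- The derivative in the angle. -/
def angleDeriv (V : ℝ × (ι → ℝ) → ℝ) (e : ℝ × (ι → ℝ)) : ℝ := fderiv ℝ V e (1, 0)

theorem HasExpGrowth.angleDeriv {n : ℕ} {V : ℝ × (ι → ℝ) → ℝ} (hV : HasExpGrowth (n + 1) V) :
    HasExpGrowth n (angleDeriv V) :=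
  hV.fderiv.clm_apply _

theorem HasExpGrowth.apply {n : ℕ} (σ : ι) : HasExpGrowth n (fun x : ι → ℝ => x σ) :=
  HasExpGrowth.clm (ContinuousLinearMap.proj (R := ℝ) (φ := fun _ : ι => ℝ) σ)

variable [DecidableEq ι]

/-- The derivative in the field with index `σ`. -/
def fieldDeriv (σ : ι) (V : ℝ × (ι → ℝ) → ℝ) (e : ℝ × (ι → ℝ)) : ℝ :=
  fderiv ℝ V e (0, Pi.single σ 1)

/-- The heat operator `∂_θ + sin θ cos θ ∑ M_{στ} ∂_σ ∂_τ`. -/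
def heatOp (M : Matrix ι ι ℝ) (V : ℝ × (ι → ℝ) → ℝ) (e : ℝ × (ι → ℝ)) : ℝ :=
  angleDeriv V e + Real.sin e.1 * Real.cos e.1 *
    ∑ σ, ∑ τ, M σ τ * fieldDeriv σ (fieldDeriv τ V) e

/-- The matrix of second moments of a measure, its covariance matrix if it is centered. -/
def secondMoment (μ : Measure (ι → ℝ)) : Matrix ι ι ℝ := fun σ τ => ∫ x, x σ * x τ ∂μ

theorem HasExpGrowth.fieldDeriv {n : ℕ} {V : ℝ × (ι → ℝ) → ℝ} (hV : HasExpGrowth (n + 1) V)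
    (σ : ι) : HasExpGrowth n (fieldDeriv σ V) :=
  hV.fderiv.clm_apply _

theorem HasExpGrowth.heatOp {V : ℝ × (ι → ℝ) → ℝ} (hV : HasExpGrowth 2 V) (M : Matrix ι ι ℝ) :
    HasExpGrowth 0 (heatOp M V) := by
  have hangle (f : ℝ → ℝ) (hf : HasExpGrowth 0 f) :
      HasExpGrowth 0 (fun e : ℝ × (ι → ℝ) => f e.1) :=
    hf.comp (.clm (.fst ℝ ℝ (ι → ℝ))) (.clm (.fst ℝ ℝ (ι → ℝ)))
  exact (hV.angleDeriv.of_le (Nat.zero_le 1)).add (((hangle _ .sin).mul (hangle _ .cos)).mul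
    (.sum fun σ _ => .sum fun τ _ => ((hV.fieldDeriv τ).fieldDeriv σ).const_mul _))

theorem zero_prodMk_eq_sum (x : ι → ℝ) :
    ((0 : ℝ), x) = ∑ σ, x σ • ((0 : ℝ), (Pi.single σ 1 : ι → ℝ)) := by
  have h := congrArg (ContinuousLinearMap.inr ℝ ℝ (ι → ℝ)) (pi_eq_sum_univ' x)
  simpa [Pi.single_apply, map_sum] using h

theorem fderiv_zero_prodMk (V : ℝ × (ι → ℝ) → ℝ) (e : ℝ × (ι → ℝ)) (x : ι → ℝ) :
    fderiv ℝ V e (0, x) = ∑ σ, x σ * fieldDeriv σ V e := by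
  rw [zero_prodMk_eq_sum, map_sum]
  simp only [map_smul, smul_eq_mul, fieldDeriv]

section GaussianAmplitude

variable {s : ℝ} {ρ : ℝ → ℝ} (hρ : IsAmplitude s ρ) {μ : Measure (ι → ℝ)}
include hρ

theorem IsAmplitude.fieldDeriv_fieldAvg (hμ : HasExpMoments μ) {V : ℝ × (ι → ℝ) → ℝ}
    (hV : HasExpGrowth 1 V) (σ : ι) :
    fieldDeriv σ (fieldAvg ρ μ V) = fieldAvg ρ μ (fieldDeriv σ V) := by
  funext e
  simp [fieldDeriv, fieldAvg, hρ.fderiv_fieldAvg hμ hV]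

variable [IsGaussian μ] (hμ : μ[id] = 0)
include hμ

theorem IsAmplitude.integral_apply_mul (σ : ι) {V : ℝ × (ι → ℝ) → ℝ} (hV : HasExpGrowth 1 V)
    (e : ℝ × (ι → ℝ)) : ∫ x, x σ * V (fieldShift ρ (x, e)) ∂μ =
      ρ e.1 * ∑ τ, secondMoment μ σ τ * fieldAvg ρ μ (fieldDeriv τ V) e := by
  have hmoments := HasExpMoments.of_isGaussian μ
  have hchain (x y : ι → ℝ) : fderiv ℝ (fun x => V (fieldShift ρ (x, e))) x y =
      ∑ τ, ρ e.1 * (y τ * fieldDeriv τ V (fieldShift ρ (x, e))) := by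
    have hshift : HasFDerivAt (fun x => fieldShift ρ (x, e))
        (ρ e.1 • ContinuousLinearMap.inr ℝ ℝ (ι → ℝ)) x :=
      ((ContinuousLinearMap.inr ℝ ℝ (ι → ℝ)).hasFDerivAt.const_smul (ρ e.1)).const_add e
    have h : HasFDerivAt (fun x => V (fieldShift ρ (x, e))) _ x :=
      (hV.differentiable _).hasFDerivAt.comp x hshift
    rw [h.fderiv, ← Finset.mul_sum, ← fderiv_zero_prodMk]
    simp
  have hquadratic (τ : ι) : Integrable (fun y : ι → ℝ => y σ * y τ) μ := by
    exact hmoments.integrable ((HasExpGrowth.apply (n := 0) σ).mul (.apply τ))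
  have hinner (c : ι → ℝ) : ∫ y, y σ * ∑ τ, ρ e.1 * (y τ * c τ) ∂μ =
      ρ e.1 * ∑ τ, secondMoment μ σ τ * c τ := by
    have hexpand (y : ι → ℝ) : y σ * ∑ τ, ρ e.1 * (y τ * c τ) =
        ρ e.1 * ∑ τ, y σ * y τ * c τ := by
      rw [← Finset.mul_sum, mul_left_comm, Finset.mul_sum]
      simp only [mul_assoc]
    simp only [hexpand, integral_const_mul]
    rw [integral_finsetSum _ fun τ _ => (hquadratic τ).mul_const _]
    simp only [integral_mul_const, secondMoment]
  have hstein := integral_mul_eq_integral_fderiv hμ (.proj (R := ℝ) σ)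
    ((hρ.hasExpGrowth_comp hV).comp_prodMk_left e)
  simp only [ContinuousLinearMap.proj_apply, hchain, hinner] at hstein
  rw [hstein, integral_const_mul, integral_finsetSum _ fun τ _ =>
    (hρ.integrable_comp hmoments (hV.fieldDeriv τ) e).const_mul _]
  simp only [integral_const_mul, fieldAvg]

theorem IsAmplitude.angleDeriv_fieldAvg {V : ℝ × (ι → ℝ) → ℝ} (hV : HasExpGrowth 2 V)
    (e : ℝ × (ι → ℝ)) : angleDeriv (fieldAvg ρ μ V) e = fieldAvg ρ μ (angleDeriv V) e +
      s * (Real.sin e.1 * Real.cos e.1) *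
        ∑ σ, ∑ τ, secondMoment μ σ τ * fieldAvg ρ μ (fieldDeriv τ (fieldDeriv σ V)) e := by
  have hmoments := HasExpMoments.of_isGaussian μ
  have hsplit (x : ι → ℝ) : fderiv ℝ V (fieldShift ρ (x, e))
      ((1, 0) + (deriv ρ e.1 * ((1 : ℝ), (0 : ι → ℝ)).1) • (0, x)) =
      angleDeriv V (fieldShift ρ (x, e)) +
        deriv ρ e.1 * ∑ σ, x σ * fieldDeriv σ V (fieldShift ρ (x, e)) := by
    rw [map_add, map_smul, fderiv_zero_prodMk, mul_one, smul_eq_mul, angleDeriv]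
  have hterm (σ : ι) : Integrable (fun x => x σ * fieldDeriv σ V (fieldShift ρ (x, e))) μ :=
    hmoments.integrable ((HasExpGrowth.apply σ).mul
      ((hρ.hasExpGrowth_comp (hV.fieldDeriv σ)).comp_prodMk_left e))
  rw [angleDeriv, hρ.fderiv_fieldAvg hmoments (hV.of_le one_le_two)]
  simp only [hsplit]
  rw [integral_add (hρ.integrable_comp hmoments (hV.angleDeriv (n := 1)) e)
    ((integrable_finsetSum _ fun σ _ => hterm σ).const_mul _), integral_const_mul,
    integral_finsetSum _ fun σ _ => hterm σ, ← hρ.mul_deriv]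
  simp only [hρ.integral_apply_mul hμ _ (hV.fieldDeriv _), ← Finset.mul_sum]
  rw [← mul_assoc, mul_comm (deriv ρ e.1), fieldAvg]

omit hμ in
theorem IsAmplitude.fieldAvg_heatOp (M : Matrix ι ι ℝ) {V : ℝ × (ι → ℝ) → ℝ}
    (hV : HasExpGrowth 2 V) (e : ℝ × (ι → ℝ)) :
    fieldAvg ρ μ (heatOp M V) e = fieldAvg ρ μ (angleDeriv V) e +
      Real.sin e.1 * Real.cos e.1 *
        ∑ σ, ∑ τ, M σ τ * fieldAvg ρ μ (fieldDeriv σ (fieldDeriv τ V)) e := by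
  have hmoments := HasExpMoments.of_isGaussian μ
  have hterm (σ τ : ι) : Integrable
      (fun x => M σ τ * fieldDeriv σ (fieldDeriv τ V) (fieldShift ρ (x, e))) μ :=
    (hρ.integrable_comp hmoments ((hV.fieldDeriv τ).fieldDeriv (n := 0) σ) e).const_mul _
  have hsum (σ : ι) := integrable_finsetSum Finset.univ fun τ _ => hterm σ τ
  simp only [fieldAvg, heatOp, fieldShift_fst]
  rw [integral_add (hρ.integrable_comp hmoments (hV.angleDeriv (n := 1)) e)
    ((integrable_finsetSum _ fun σ _ => hsum σ).const_mul _), integral_const_mul,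
    integral_finsetSum _ fun σ _ => hsum σ]
  simp only [integral_finsetSum _ fun τ _ => hterm _ τ, integral_const_mul]

theorem IsAmplitude.heatOp_fieldAvg (M : Matrix ι ι ℝ) {V : ℝ × (ι → ℝ) → ℝ}
    (hV : HasExpGrowth 2 V) (e : ℝ × (ι → ℝ)) :
    heatOp (M - s • secondMoment μ) (fieldAvg ρ μ V) e = fieldAvg ρ μ (heatOp M V) e := by
  have hmoments := HasExpMoments.of_isGaussian μ
  have hsymm : ∑ σ, ∑ τ, secondMoment μ σ τ * fieldAvg ρ μ (fieldDeriv τ (fieldDeriv σ V)) e =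
      ∑ σ, ∑ τ, secondMoment μ σ τ * fieldAvg ρ μ (fieldDeriv σ (fieldDeriv τ V)) e := by
    rw [Finset.sum_comm]
    simp only [secondMoment, mul_comm]
  have hsecond (σ τ : ι) : fieldDeriv σ (fieldDeriv τ (fieldAvg ρ μ V)) =
      fieldAvg ρ μ (fieldDeriv σ (fieldDeriv τ V)) := by
    rw [hρ.fieldDeriv_fieldAvg hmoments (hV.of_le one_le_two),
      hρ.fieldDeriv_fieldAvg hmoments (hV.fieldDeriv τ)]
  rw [hρ.fieldAvg_heatOp M hV, heatOp, hρ.angleDeriv_fieldAvg hμ hV, hsymm]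
  simp only [hsecond, Matrix.sub_apply, Matrix.smul_apply, smul_eq_mul, sub_mul, mul_assoc,
    Finset.sum_sub_distrib, ← Finset.mul_sum]
  ring

end GaussianAmplitude

end InterpolatedAverage

/-! ## Cumulant averages and the Parisi operator -/

section ParisiOperator

variable {ι : Type}

/-- The cumulant average `m⁻¹ log E exp(m F)` over the random field `ρ(θ) x` with `x` distributed
according to `μ`; the plain average at `m = 0`. -/
def cumulantAvg (m : ℝ) (ρ : ℝ → ℝ) (μ : Measure (ι → ℝ)) (F : ℝ × (ι → ℝ) → ℝ)
    (e : ℝ × (ι → ℝ)) : ℝ :=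
  if m = 0 then fieldAvg ρ μ F e
  else m⁻¹ * Real.log (fieldAvg ρ μ (fun e => Real.exp (m * F e)) e)

theorem cumulantAvg_zero (ρ : ℝ → ℝ) (μ : Measure (ι → ℝ)) (F : ℝ × (ι → ℝ) → ℝ) :
    cumulantAvg 0 ρ μ F = fieldAvg ρ μ F :=
  funext fun _ => if_pos rfl

theorem cumulantAvg_of_pos {m : ℝ} (hm : 0 < m) (ρ : ℝ → ℝ) (μ : Measure (ι → ℝ))
    (F : ℝ × (ι → ℝ) → ℝ) : cumulantAvg m ρ μ F =
      fun e => m⁻¹ * Real.log (fieldAvg ρ μ (fun e => Real.exp (m * F e)) e) :=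
  funext fun _ => if_neg hm.ne'

variable [Fintype ι] [DecidableEq ι]

/-- The nonlinear operator `∂_θ F + sin θ cos θ ∑ M_{στ} (∂_σ ∂_τ F + m ∂_σ F ∂_τ F)`, which
`F ↦ exp(m F)` turns into the heat operator. -/
def parisiOp (m : ℝ) (M : Matrix ι ι ℝ) (F : ℝ × (ι → ℝ) → ℝ) (e : ℝ × (ι → ℝ)) : ℝ :=
  heatOp M F e + m * (Real.sin e.1 * Real.cos e.1 *
    ∑ σ, ∑ τ, M σ τ * (fieldDeriv σ F e * fieldDeriv τ F e))

/-- The invariant of the recursion: the field derivatives of `F` are the weights of a probability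
measure on `ι` (the Gibbs measure), and `F` is a subsolution of the Parisi equation up to a
constant `c`. -/
structure IsParisiSubsolution (m : ℝ) (M : Matrix ι ι ℝ) (c : ℝ) (F : ℝ × (ι → ℝ) → ℝ) :
    Prop where
  hasExpGrowth : HasExpGrowth 2 F
  hasLinearGrowth : HasLinearGrowth F
  fieldDeriv_nonneg (σ : ι) (e : ℝ × (ι → ℝ)) : 0 ≤ fieldDeriv σ F e
  sum_fieldDeriv (e : ℝ × (ι → ℝ)) : ∑ σ, fieldDeriv σ F e = 1
  parisiOp_le (e : ℝ × (ι → ℝ)) (he : e.1 ∈ Set.Icc 0 (Real.pi / 2)) :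
    parisiOp m M F e ≤ c * (Real.sin e.1 * Real.cos e.1)

theorem sin_mul_cos_nonneg {θ : ℝ} (hθ : θ ∈ Set.Icc 0 (Real.pi / 2)) :
    0 ≤ Real.sin θ * Real.cos θ :=
  mul_nonneg (Real.sin_nonneg_of_nonneg_of_le_pi hθ.1 (by linarith [hθ.2, Real.pi_pos]))
    (Real.cos_nonneg_of_neg_pi_div_two_le_of_le (by linarith [hθ.1, Real.pi_pos]) hθ.2)

section Exponential

variable {F : ℝ × (ι → ℝ) → ℝ}

omit [DecidableEq ι] in
theorem fderiv_exp_const_mul (m : ℝ) (hF : HasExpGrowth 1 F) (e y : ℝ × (ι → ℝ)) :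
    fderiv ℝ (fun e => Real.exp (m * F e)) e y =
      m * (Real.exp (m * F e) * fderiv ℝ F e y) := by
  rw [((hF.differentiable e).hasFDerivAt.const_mul m).exp.fderiv]
  simp only [smul_apply, smul_eq_mul]
  ring

theorem fieldDeriv_exp_const_mul (m : ℝ) (hF : HasExpGrowth 1 F) (σ : ι) :
    fieldDeriv σ (fun e => Real.exp (m * F e)) =
      fun e => m * (Real.exp (m * F e) * fieldDeriv σ F e) :=
  funext fun e => fderiv_exp_const_mul m hF e _

theorem fieldDeriv_fieldDeriv_exp_const_mul (m : ℝ) (hF : HasExpGrowth 2 F) (σ τ : ι)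
    (e : ℝ × (ι → ℝ)) : fieldDeriv σ (fieldDeriv τ fun e => Real.exp (m * F e)) e =
      m * Real.exp (m * F e) *
        (fieldDeriv σ (fieldDeriv τ F) e + m * (fieldDeriv σ F e * fieldDeriv τ F e)) := by
  have hF1 : HasExpGrowth 1 F := hF.of_le one_le_two
  have hexp : HasFDerivAt (fun e => Real.exp (m * F e)) _ e :=
    ((hF1.differentiable e).hasFDerivAt.const_mul m).exp
  have hprod := (hexp.fun_mul ((hF.fieldDeriv τ).differentiable e).hasFDerivAt).const_mul m
  rw [fieldDeriv_exp_const_mul m hF1, fieldDeriv, hprod.fderiv]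
  simp only [smul_apply, add_apply, smul_eq_mul, fieldDeriv]
  ring

theorem heatOp_exp_const_mul (m : ℝ) (M : Matrix ι ι ℝ) (hF : HasExpGrowth 2 F)
    (e : ℝ × (ι → ℝ)) : heatOp M (fun e => Real.exp (m * F e)) e =
      m * Real.exp (m * F e) * parisiOp m M F e := by
  simp only [heatOp, parisiOp, angleDeriv, fieldDeriv_fieldDeriv_exp_const_mul m hF,
    fderiv_exp_const_mul m (hF.of_le one_le_two), mul_add, Finset.sum_add_distrib, Finset.mul_sum]
  rw [add_assoc, mul_assoc]
  congr 2 <;> exact Finset.sum_congr rfl fun σ _ => Finset.sum_congr rfl fun τ _ => by ring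

end Exponential

section Average

variable {s : ℝ} {ρ : ℝ → ℝ} (hρ : IsAmplitude s ρ) {μ : Measure (ι → ℝ)}
include hρ

omit [DecidableEq ι] in
theorem IsAmplitude.hasLinearGrowth_fieldAvg [IsProbabilityMeasure μ] (hμ : HasExpMoments μ)
    {V : ℝ × (ι → ℝ) → ℝ} (hV : HasLinearGrowth V) : HasLinearGrowth (fieldAvg ρ μ V) :=
  (hV.comp hρ.hasLinearGrowth_fieldShift).integral hμ

omit [DecidableEq ι] in
theorem IsAmplitude.hasExpLowerBound_fieldAvg [IsProbabilityMeasure μ] (hμ : HasExpMoments μ)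
    {V : ℝ × (ι → ℝ) → ℝ} {n : ℕ} (hV : HasExpGrowth n V) (hlow : HasExpLowerBound V) :
    HasExpLowerBound (fieldAvg ρ μ V) :=
  (hlow.comp hρ.hasLinearGrowth_fieldShift).integral hμ (hρ.hasExpGrowth_comp hV)

omit [DecidableEq ι] in
theorem IsAmplitude.sum_fieldAvg (hμ : HasExpMoments μ) {V : ι → ℝ × (ι → ℝ) → ℝ}
    (hV : ∀ σ, HasExpGrowth 1 (V σ)) (e : ℝ × (ι → ℝ)) :
    ∑ σ, fieldAvg ρ μ (V σ) e = fieldAvg ρ μ (fun e => ∑ σ, V σ e) e := by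
  simp only [fieldAvg]
  rw [integral_finsetSum _ fun σ _ => hρ.integrable_comp hμ (hV σ) e]

theorem IsAmplitude.heatOp_fieldAvg_le [IsGaussian μ] (hμ : μ[id] = 0) {M : Matrix ι ι ℝ}
    {V W : ℝ × (ι → ℝ) → ℝ} (hV : HasExpGrowth 2 V) (hW : HasExpGrowth 0 W) {c : ℝ}
    (h : ∀ e : ℝ × (ι → ℝ), e.1 ∈ Set.Icc 0 (Real.pi / 2) →
      heatOp M V e ≤ W e * (c * (Real.sin e.1 * Real.cos e.1)))
    (e : ℝ × (ι → ℝ)) (he : e.1 ∈ Set.Icc 0 (Real.pi / 2)) :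
    heatOp (M - s • secondMoment μ) (fieldAvg ρ μ V) e ≤
      fieldAvg ρ μ W e * (c * (Real.sin e.1 * Real.cos e.1)) := by
  have hmoments := HasExpMoments.of_isGaussian μ
  rw [hρ.heatOp_fieldAvg hμ M hV, fieldAvg, fieldAvg, ← integral_mul_const]
  refine integral_mono (hρ.integrable_comp hmoments (hV.heatOp M) e)
    ((hρ.integrable_comp hmoments hW e).mul_const _) fun x => ?_
  simpa only [fieldShift_fst] using h (fieldShift ρ (x, e)) (by rwa [fieldShift_fst])

end Average

namespace IsParisiSubsolution

variable {m c : ℝ} {M : Matrix ι ι ℝ}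

theorem of_exp {F : ℝ × (ι → ℝ) → ℝ} (hm : 0 < m) (hF : HasExpGrowth 2 F)
    (hlin : HasLinearGrowth F)
    (hnonneg : ∀ σ e, 0 ≤ fieldDeriv σ (fun e => Real.exp (m * F e)) e)
    (hsum : ∀ e, ∑ σ, fieldDeriv σ (fun e => Real.exp (m * F e)) e = m * Real.exp (m * F e))
    (hheat : ∀ e : ℝ × (ι → ℝ), e.1 ∈ Set.Icc 0 (Real.pi / 2) →
      heatOp M (fun e => Real.exp (m * F e)) e ≤
        m * Real.exp (m * F e) * (c * (Real.sin e.1 * Real.cos e.1))) :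
    IsParisiSubsolution m M c F := by
  have hpos (e : ℝ × (ι → ℝ)) : 0 < m * Real.exp (m * F e) := mul_pos hm (Real.exp_pos _)
  simp only [fieldDeriv_exp_const_mul m (hF.of_le one_le_two), ← mul_assoc] at hnonneg hsum
  simp only [heatOp_exp_const_mul m M hF] at hheat
  refine ⟨hF, hlin, fun σ e => nonneg_of_mul_nonneg_right (hnonneg σ e) (hpos e), fun e => ?_,
    fun e he => le_of_mul_le_mul_left (hheat e he) (hpos e)⟩
  have h := hsum e
  rw [← Finset.mul_sum] at h
  exact (mul_eq_left₀ (hpos e).ne').1 h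

theorem of_log {V : ℝ × (ι → ℝ) → ℝ} (hm : 0 < m) (hV : HasExpGrowth 2 V)
    (hlow : HasExpLowerBound V) (hnonneg : ∀ σ e, 0 ≤ fieldDeriv σ V e)
    (hsum : ∀ e, ∑ σ, fieldDeriv σ V e = m * V e)
    (hheat : ∀ e : ℝ × (ι → ℝ), e.1 ∈ Set.Icc 0 (Real.pi / 2) →
      heatOp M V e ≤ m * V e * (c * (Real.sin e.1 * Real.cos e.1))) :
    IsParisiSubsolution m M c (fun e => m⁻¹ * Real.log (V e)) := by
  have hexp : (fun e => Real.exp (m * (m⁻¹ * Real.log (V e)))) = V :=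
    funext fun e => by rw [mul_inv_cancel_left₀ hm.ne', Real.exp_log (hlow.pos e)]
  have hexp' (e : ℝ × (ι → ℝ)) := congrFun hexp e
  refine of_exp hm ((hV.log hlow).const_mul _)
    ((hlow.hasLinearGrowth_log (hV.of_le zero_le_two)).const_mul _) ?_ ?_ ?_ <;>
  simpa only [hexp, hexp']

variable {F : ℝ × (ι → ℝ) → ℝ} {s : ℝ} {ρ : ℝ → ℝ} {μ : Measure (ι → ℝ)} [IsGaussian μ]

theorem map_fieldAvg (hF : IsParisiSubsolution 0 M c F) (hρ : IsAmplitude s ρ) (hμ : μ[id] = 0) :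
    IsParisiSubsolution 0 (M - s • secondMoment μ) c (fieldAvg ρ μ F) := by
  have hmoments := HasExpMoments.of_isGaussian μ
  have hF1 : HasExpGrowth 1 F := hF.hasExpGrowth.of_le one_le_two
  refine ⟨hρ.hasExpGrowth_fieldAvg hmoments hF.hasExpGrowth,
    hρ.hasLinearGrowth_fieldAvg hmoments hF.hasLinearGrowth, fun σ e => ?_, fun e => ?_,
    fun e he => ?_⟩
  · rw [hρ.fieldDeriv_fieldAvg hmoments hF1]
    exact integral_nonneg fun x => hF.fieldDeriv_nonneg σ _
  · simp only [hρ.fieldDeriv_fieldAvg hmoments hF1]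
    rw [hρ.sum_fieldAvg hmoments hF.hasExpGrowth.fieldDeriv]
    simp only [hF.sum_fieldDeriv, fieldAvg, integral_const, probReal_univ, one_smul]
  · have h := hρ.heatOp_fieldAvg_le hμ hF.hasExpGrowth (.const (1 : ℝ))
      (fun e he => by simpa [parisiOp] using hF.parisiOp_le e he) e he
    simpa [fieldAvg, parisiOp] using h

theorem map_log_fieldAvg (hm : 0 < m) (hF : IsParisiSubsolution m M c F) (hρ : IsAmplitude s ρ)
    (hμ : μ[id] = 0) : IsParisiSubsolution m (M - s • secondMoment μ) c
      (fun e => m⁻¹ * Real.log (fieldAvg ρ μ (fun e => Real.exp (m * F e)) e)) := by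
  have hmoments := HasExpMoments.of_isGaussian μ
  have hF1 : HasExpGrowth 1 F := hF.hasExpGrowth.of_le one_le_two
  have hlin := hF.hasLinearGrowth.const_mul m
  have hV : HasExpGrowth 2 (fun e => Real.exp (m * F e)) := (hF.hasExpGrowth.const_mul m).exp hlin
  have hVderiv (σ : ι) := hρ.fieldDeriv_fieldAvg hmoments (hV.of_le one_le_two) σ
  refine of_log hm (hρ.hasExpGrowth_fieldAvg hmoments hV)
    (hρ.hasExpLowerBound_fieldAvg hmoments hV hlin.hasExpLowerBound_exp) (fun σ e => ?_)
    (fun e => ?_) fun e he => ?_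
  · rw [hVderiv, fieldDeriv_exp_const_mul m hF1]
    exact integral_nonneg fun x => mul_nonneg hm.le
      (mul_nonneg (Real.exp_pos _).le (hF.fieldDeriv_nonneg σ _))
  · simp only [hVderiv]
    rw [hρ.sum_fieldAvg hmoments hV.fieldDeriv]
    simp only [fieldDeriv_exp_const_mul m hF1, ← Finset.mul_sum, hF.sum_fieldDeriv, mul_one,
      fieldAvg, integral_const_mul]
  · have h := hρ.heatOp_fieldAvg_le hμ hV ((hV.of_le zero_le_two).const_mul m) (fun e he => by
      rw [heatOp_exp_const_mul m M hF.hasExpGrowth]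
      exact mul_le_mul_of_nonneg_left (hF.parisiOp_le e he)
        (mul_pos hm (Real.exp_pos _)).le) e he
    simpa only [fieldAvg, integral_const_mul] using h

theorem map_cumulantAvg (hm : 0 ≤ m) (hF : IsParisiSubsolution m M c F) (hρ : IsAmplitude s ρ)
    (hμ : μ[id] = 0) :
    IsParisiSubsolution m (M - s • secondMoment μ) c (cumulantAvg m ρ μ F) := by
  rcases hm.eq_or_lt with rfl | hm
  · rw [cumulantAvg_zero]
    exact hF.map_fieldAvg hρ hμ
  · rw [cumulantAvg_of_pos hm]
    exact hF.map_log_fieldAvg hm hρ hμ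

omit [IsGaussian μ] in
theorem neg_le_sum_mul_fieldDeriv (hF : IsParisiSubsolution m M c F) {B : Matrix ι ι ℝ} {κ : ℝ}
    (hB : ∀ σ τ, -κ ≤ B σ τ) (e : ℝ × (ι → ℝ)) :
    -κ ≤ ∑ σ, ∑ τ, B σ τ * (fieldDeriv σ F e * fieldDeriv τ F e) := by
  calc -κ = ∑ σ, ∑ τ, -κ * (fieldDeriv σ F e * fieldDeriv τ F e) := by
        simp only [← Finset.mul_sum, hF.sum_fieldDeriv, mul_one]
    _ ≤ _ := Finset.sum_le_sum fun σ _ => Finset.sum_le_sum fun τ _ =>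
        mul_le_mul_of_nonneg_right (hB σ τ)
          (mul_nonneg (hF.fieldDeriv_nonneg σ e) (hF.fieldDeriv_nonneg τ e))

/-- Lowering `m` costs the two-replica Gibbs average of `-M`, which is at most `κ`. -/
theorem of_le (hF : IsParisiSubsolution m M c F) {m' κ : ℝ} (hm : m' ≤ m)
    (hM : ∀ σ τ, -κ ≤ M σ τ) : IsParisiSubsolution m' M (c + (m - m') * κ) F := by
  refine ⟨hF.hasExpGrowth, hF.hasLinearGrowth, hF.fieldDeriv_nonneg, hF.sum_fieldDeriv,
    fun e he => ?_⟩
  have hweights := mul_le_mul_of_nonneg_left (hF.neg_le_sum_mul_fieldDeriv hM e)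
    (mul_nonneg (sub_nonneg.2 hm) (sin_mul_cos_nonneg he))
  have hop := hF.parisiOp_le e he
  simp only [parisiOp] at hop ⊢
  linarith

theorem sub_le_half {m c : ℝ} {F : ℝ × (ι → ℝ) → ℝ} (hF : IsParisiSubsolution m 0 c F)
    (x : ι → ℝ) : F (Real.pi / 2, x) - F (0, x) ≤ c / 2 := by
  have hderiv (θ : ℝ) : HasDerivAt (fun θ => F (θ, x) - c * (Real.sin θ ^ 2 / 2))
      (angleDeriv F (θ, x) - c * (Real.sin θ * Real.cos θ)) θ := by
    have hcurve : HasDerivAt (fun θ : ℝ => (θ, x)) ((1 : ℝ), (0 : ι → ℝ)) θ :=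
      (hasDerivAt_id θ).prodMk (hasDerivAt_const θ x)
    have hFderiv := (hF.hasExpGrowth.differentiable (θ, x)).hasFDerivAt.comp_hasDerivAt θ hcurve
    have hsq := (((Real.hasDerivAt_sin θ).pow 2).div_const 2).const_mul c
    refine (hFderiv.sub hsq).congr_deriv ?_
    simp only [angleDeriv, Nat.cast_ofNat, Nat.add_one_sub_one, pow_one]
    ring
  have hanti : AntitoneOn (fun θ => F (θ, x) - c * (Real.sin θ ^ 2 / 2))
      (Set.Icc 0 (Real.pi / 2)) := by
    refine antitoneOn_of_hasDerivWithinAt_nonpos (convex_Icc _ _)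
      (fun θ _ => (hderiv θ).continuousAt.continuousWithinAt)
      (fun θ _ => (hderiv θ).hasDerivWithinAt) fun θ hθ => sub_nonpos.2 ?_
    simpa [parisiOp, heatOp] using hF.parisiOp_le (θ, x) (interior_subset hθ)
  have hpi : 0 ≤ Real.pi / 2 := by positivity
  have h := hanti (Set.left_mem_Icc.2 hpi) (Set.right_mem_Icc.2 hpi) hpi
  simp only [Real.sin_pi_div_two, Real.sin_zero] at h
  linarith

end IsParisiSubsolution

end ParisiOperator

section LogSumExp

variable {ι : Type}

/-- The free energy `log ∑_σ exp(x_σ)` of the fields `x`. -/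
def logSumExp [Fintype ι] (e : ℝ × (ι → ℝ)) : ℝ := Real.log (∑ σ, Real.exp (e.2 σ))

theorem hasExpGrowth_exp_apply [Fintype ι] {n : ℕ} (σ : ι) :
    HasExpGrowth n (fun e : ℝ × (ι → ℝ) => Real.exp (e.2 σ)) :=
  let field := (ContinuousLinearMap.proj (R := ℝ) (φ := fun _ : ι => ℝ) σ).comp (.snd ℝ ℝ (ι → ℝ))
  (HasExpGrowth.clm field).exp (.clm field)

theorem hasExpLowerBound_sum_exp [Fintype ι] [Nonempty ι] :
    HasExpLowerBound (fun e : ℝ × (ι → ℝ) => ∑ σ, Real.exp (e.2 σ)) := by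
  obtain ⟨τ⟩ := ‹Nonempty ι›
  refine ⟨1, zero_le_one, fun e => ?_⟩
  calc Real.exp (-(1 * (1 + ‖e‖))) ≤ Real.exp (e.2 τ) := by
        have hτ := neg_le_of_abs_le ((norm_le_pi_norm e.2 τ).trans (norm_snd_le e))
        gcongr
        linarith
    _ ≤ ∑ σ, Real.exp (e.2 σ) :=
        Finset.single_le_sum (fun σ _ => (Real.exp_pos (e.2 σ)).le) (Finset.mem_univ τ)

theorem fderiv_exp_apply [Finite ι] (σ : ι) (e y : ℝ × (ι → ℝ)) :
    fderiv ℝ (fun e : ℝ × (ι → ℝ) => Real.exp (e.2 σ)) e y = Real.exp (e.2 σ) * y.2 σ := by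
  have := Fintype.ofFinite ι
  have h : HasFDerivAt (fun e : ℝ × (ι → ℝ) => e.2 σ) _ e :=
    ((ContinuousLinearMap.proj (R := ℝ) (φ := fun _ : ι => ℝ) σ).comp
      (.snd ℝ ℝ (ι → ℝ))).hasFDerivAt
  rw [h.exp.fderiv]
  simp

theorem fderiv_sum_exp [Fintype ι] (e y : ℝ × (ι → ℝ)) :
    fderiv ℝ (fun e : ℝ × (ι → ℝ) => ∑ σ, Real.exp (e.2 σ)) e y =
      ∑ σ, Real.exp (e.2 σ) * y.2 σ := by
  rw [fderiv_fun_sum fun σ _ => (hasExpGrowth_exp_apply (n := 1) σ).differentiable e, sum_apply]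
  simp only [fderiv_exp_apply]

variable [Fintype ι] [DecidableEq ι]

theorem fieldDeriv_sum_exp (σ : ι) :
    fieldDeriv σ (fun e => ∑ τ, Real.exp (e.2 τ)) = fun e => Real.exp (e.2 σ) := by
  funext e
  simp [fieldDeriv, fderiv_sum_exp, Pi.single_apply]

theorem heatOp_sum_exp (M : Matrix ι ι ℝ) (e : ℝ × (ι → ℝ)) :
    heatOp M (fun e => ∑ σ, Real.exp (e.2 σ)) e =
      Real.sin e.1 * Real.cos e.1 * ∑ σ, M σ σ * Real.exp (e.2 σ) := by
  simp only [heatOp, angleDeriv, fderiv_sum_exp, fieldDeriv_sum_exp]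
  simp [fieldDeriv, fderiv_exp_apply, Pi.single_apply]

theorem isParisiSubsolution_logSumExp [Nonempty ι] {M : Matrix ι ι ℝ} {c : ℝ}
    (hM : ∀ σ, M σ σ ≤ c) : IsParisiSubsolution 1 M c logSumExp := by
  have hlog : logSumExp = fun e : ℝ × (ι → ℝ) => 1⁻¹ * Real.log (∑ σ, Real.exp (e.2 σ)) :=
    funext fun e => by rw [inv_one, one_mul, logSumExp]
  rw [hlog]
  refine .of_log one_pos (.sum fun σ _ => hasExpGrowth_exp_apply σ) hasExpLowerBound_sum_exp
    (fun σ e => ?_) (fun e => ?_) fun e he => ?_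
  · rw [fieldDeriv_sum_exp]
    positivity
  · simp only [fieldDeriv_sum_exp, one_mul]
  · calc heatOp M (fun e => ∑ σ, Real.exp (e.2 σ)) e
        = Real.sin e.1 * Real.cos e.1 * ∑ σ, M σ σ * Real.exp (e.2 σ) := heatOp_sum_exp M e
      _ ≤ Real.sin e.1 * Real.cos e.1 * ∑ σ, c * Real.exp (e.2 σ) := by
          have := sin_mul_cos_nonneg he
          gcongr with σ
          exact hM σ
      _ = 1 * (∑ σ, Real.exp (e.2 σ)) * (c * (Real.sin e.1 * Real.cos e.1)) := by
          rw [← Finset.mul_sum]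
          ring

end LogSumExp

section GaussianField

open scoped Matrix

variable {α ι : Type} [Fintype α]

theorem integral_eval_pi_stdGauss (a : α) {f : ℝ → ℝ} (hf : Continuous f) :
    ∫ J, f (J a) ∂(Measure.pi fun _ : α => stdGauss) = ∫ z, f z ∂stdGauss :=
  integral_comp_eval (X := fun _ => ℝ) (i := a) hf.aestronglyMeasurable

theorem iIndepFun_eval_pi_stdGauss :
    iIndepFun (fun (a : α) (J : α → ℝ) => J a) (Measure.pi fun _ : α => stdGauss) :=
  iIndepFun_pi (X := fun _ => id) fun _ => aemeasurable_id

instance isGaussian_pi_stdGauss : IsGaussian (Measure.pi fun _ : α => stdGauss) := by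
  have hlaw (a : α) : HasGaussianLaw (fun J : α → ℝ => J a) (Measure.pi fun _ : α => stdGauss) :=
    ⟨by
      rw [(measurePreserving_eval _ a).map_eq]
      exact isGaussian_gaussianReal 0 1⟩
  simpa using (iIndepFun_eval_pi_stdGauss.hasGaussianLaw hlaw).isGaussian_map

theorem integral_apply_pi_stdGauss (a : α) :
    ∫ J, J a ∂(Measure.pi fun _ : α => stdGauss) = 0 :=
  (integral_eval_pi_stdGauss a continuous_id).trans integral_id_gaussianReal

theorem integral_mul_pi_stdGauss [DecidableEq α] (a b : α) :
    ∫ J, J a * J b ∂(Measure.pi fun _ : α => stdGauss) = if a = b then 1 else 0 := by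
  split_ifs with hab
  · rw [← hab, integral_eval_pi_stdGauss a (f := fun z => z * z) (by fun_prop)]
    have hvar := variance_fun_id_gaussianReal (μ := 0) (v := 1)
    rw [variance_of_integral_eq_zero (by fun_prop) integral_id_gaussianReal] at hvar
    simpa [stdGauss, sq] using hvar
  · have hprod := (iIndepFun_eval_pi_stdGauss.indepFun hab).integral_fun_mul_eq_mul_integral
      (measurable_pi_apply a).aestronglyMeasurable (measurable_pi_apply b).aestronglyMeasurable
    simpa only [integral_apply_pi_stdGauss, mul_zero] using hprod

theorem integrable_of_pi_stdGauss {n : ℕ} {f : (α → ℝ) → ℝ} (hf : HasExpGrowth n f) :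
    Integrable f (Measure.pi fun _ : α => stdGauss) :=
  (HasExpMoments.of_isGaussian _).integrable hf

/-- The law of the Gaussian field `A J`, with `J` a vector of independent standard Gaussians. -/
def gaussField (A : Matrix ι α ℝ) : Measure (ι → ℝ) :=
  (Measure.pi fun _ : α => stdGauss).map fun J => A *ᵥ J

variable [Finite ι] (A : Matrix ι α ℝ)

instance isGaussian_gaussField : IsGaussian (gaussField A) :=
  have := Fintype.ofFinite ι
  isGaussian_map (A.mulVecLin.toContinuousLinearMap)

theorem integral_gaussField {f : (ι → ℝ) → ℝ} (hf : Continuous f) :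
    ∫ x, f x ∂gaussField A = ∫ J, f (A *ᵥ J) ∂(Measure.pi fun _ : α => stdGauss) :=
  have := Fintype.ofFinite ι
  integral_map (by fun_prop) hf.aestronglyMeasurable

omit [Finite ι] in
theorem integral_id_gaussField [Fintype ι] : (gaussField A)[id] = 0 := by
  have hint : Integrable id (gaussField A) := IsGaussian.integrable_id
  funext σ
  rw [eval_integral fun τ => hint.eval τ, Pi.zero_apply,
    integral_gaussField A (f := fun x => id x σ) (by fun_prop)]
  simp only [id, Matrix.mulVec, dotProduct]
  rw [integral_finsetSum _ fun a _ =>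
    integrable_of_pi_stdGauss (n := 0) ((HasExpGrowth.apply a).const_mul _)]
  simp only [integral_const_mul, integral_apply_pi_stdGauss, mul_zero, Finset.sum_const_zero]

theorem secondMoment_gaussField : secondMoment (gaussField A) = A * Aᵀ := by
  classical
  ext σ τ
  have hint (a b : α) : Integrable (fun J : α → ℝ => A σ a * J a * (A τ b * J b))
      (Measure.pi fun _ : α => stdGauss) :=
    integrable_of_pi_stdGauss (n := 0) (((HasExpGrowth.apply a).const_mul _).mul
      ((HasExpGrowth.apply b).const_mul _))
  rw [secondMoment, integral_gaussField A (f := fun x => x σ * x τ) (by fun_prop)]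
  simp only [Matrix.mulVec, dotProduct, Finset.sum_mul_sum]
  rw [integral_finsetSum _ fun a _ => integrable_finsetSum _ fun b _ => hint a b]
  simp only [integral_finsetSum Finset.univ fun b _ => hint _ b]
  simp only [mul_mul_mul_comm, integral_const_mul, integral_mul_pi_stdGauss]
  simp [Matrix.mul_apply]

theorem fieldAvg_gaussField (ρ : ℝ → ℝ) {V : ℝ × (ι → ℝ) → ℝ} (hV : Continuous V) (θ : ℝ)
    (x : ι → ℝ) : fieldAvg ρ (gaussField A) V (θ, x) =
      ∫ J, V (θ, x + ρ θ • A *ᵥ J) ∂(Measure.pi fun _ : α => stdGauss) := by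
  simp only [fieldAvg, fieldShift, Prod.smul_mk, Prod.mk_add_mk, smul_zero, add_zero]
  rw [integral_gaussField A (f := fun y => V (θ, x + ρ θ • y)) (by fun_prop)]

omit [Finite ι] in
theorem fieldAvg_of_amplitude_eq_zero {ρ : ℝ → ℝ} {θ : ℝ} (hρ : ρ θ = 0) (μ : Measure (ι → ℝ))
    [IsProbabilityMeasure μ] (V : ℝ × (ι → ℝ) → ℝ) (x : ι → ℝ) :
    fieldAvg ρ μ V (θ, x) = V (θ, x) := by
  simp [fieldAvg, fieldShift, hρ]

omit [Finite ι] in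
theorem cumulantAvg_of_amplitude_eq_zero {ρ : ℝ → ℝ} {θ : ℝ} (hρ : ρ θ = 0)
    (μ : Measure (ι → ℝ)) [IsProbabilityMeasure μ] (m : ℝ) (F : ℝ × (ι → ℝ) → ℝ) (x : ι → ℝ) :
    cumulantAvg m ρ μ F (θ, x) = F (θ, x) := by
  simp only [cumulantAvg, fieldAvg_of_amplitude_eq_zero hρ, Real.log_exp]
  split_ifs with hm
  · rfl
  · exact inv_mul_cancel_left₀ hm _

end GaussianField

/-! ## The Parisi recursion -/

section ParisiRecursion

theorem hasExpMoments_stdGauss : HasExpMoments stdGauss :=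
  have : IsGaussian stdGauss := isGaussian_gaussianReal 0 1
  .of_isGaussian stdGauss

theorem pStep_zero (s : ℝ) (g : ℝ → ℝ) :
    pStep 0 s g = fun y => ∫ z, g (y + z * Real.sqrt s) ∂stdGauss :=
  funext fun _ => if_pos rfl

theorem pStep_of_ne_zero {m : ℝ} (hm : m ≠ 0) (s : ℝ) (g : ℝ → ℝ) : pStep m s g =
    fun y => m⁻¹ * Real.log (∫ z, Real.exp (m * g (y + z * Real.sqrt s)) ∂stdGauss) :=
  funext fun _ => if_neg hm

section Step

variable {n : ℕ} {g : ℝ → ℝ}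

theorem HasExpGrowth.comp_add_mul_sqrt (hg : HasExpGrowth n g) (s : ℝ) :
    HasExpGrowth n (fun w : ℝ × ℝ => g (w.2 + w.1 * Real.sqrt s)) :=
  let step := ContinuousLinearMap.snd ℝ ℝ ℝ + (ContinuousLinearMap.fst ℝ ℝ ℝ).smulRight (√s)
  hg.comp (.clm step) (.clm step)

theorem HasLinearGrowth.comp_add_mul_sqrt (hlin : HasLinearGrowth g) (s : ℝ) :
    HasLinearGrowth (fun w : ℝ × ℝ => g (w.2 + w.1 * Real.sqrt s)) :=
  let step := ContinuousLinearMap.snd ℝ ℝ ℝ + (ContinuousLinearMap.fst ℝ ℝ ℝ).smulRight (√s)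
  hlin.comp (.clm step)

variable (hg : HasExpGrowth n g) (hlin : HasLinearGrowth g) (m s : ℝ)
include hg hlin

theorem hasExpGrowth_exp_mul_comp_add_mul_sqrt :
    HasExpGrowth n (fun w : ℝ × ℝ => Real.exp (m * g (w.2 + w.1 * Real.sqrt s))) :=
  ((hg.comp_add_mul_sqrt s).const_mul m).exp ((hlin.comp_add_mul_sqrt s).const_mul m)

theorem hasExpLowerBound_integral_exp_mul :
    HasExpLowerBound fun y => ∫ z, Real.exp (m * g (y + z * Real.sqrt s)) ∂stdGauss :=
  ((hlin.comp_add_mul_sqrt s).const_mul m).hasExpLowerBound_exp.integral hasExpMoments_stdGauss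
    (hasExpGrowth_exp_mul_comp_add_mul_sqrt hg hlin m s)

theorem HasExpGrowth.pStep : HasExpGrowth n (pStep m s g) := by
  rcases eq_or_ne m 0 with rfl | hm
  · rw [pStep_zero]
    exact (hg.comp_add_mul_sqrt s).integral hasExpMoments_stdGauss
  · rw [pStep_of_ne_zero hm]
    exact (((hasExpGrowth_exp_mul_comp_add_mul_sqrt hg hlin m s).integral
      hasExpMoments_stdGauss).log (hasExpLowerBound_integral_exp_mul hg hlin m s)).const_mul _

theorem HasLinearGrowth.pStep : HasLinearGrowth (pStep m s g) := by
  rcases eq_or_ne m 0 with rfl | hm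
  · rw [pStep_zero]
    have : IsProbabilityMeasure stdGauss := inferInstance
    exact (hlin.comp_add_mul_sqrt s).integral hasExpMoments_stdGauss
  · rw [pStep_of_ne_zero hm]
    exact ((hasExpLowerBound_integral_exp_mul hg hlin m s).hasLinearGrowth_log
      (((hasExpGrowth_exp_mul_comp_add_mul_sqrt hg hlin m s).integral
        hasExpMoments_stdGauss).of_le n.zero_le)).const_mul _

end Step

theorem hasExpGrowth_cosh_mul {n : ℕ} (β : ℝ) :
    HasExpGrowth n (fun y => Real.cosh (β * y)) := by
  have hexp (β : ℝ) : HasExpGrowth n (fun y : ℝ => Real.exp (β * y)) :=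
    (HasExpGrowth.clm (β • ContinuousLinearMap.id ℝ ℝ)).exp (.clm _)
  have hcosh := ((hexp β).add (hexp (-β))).const_mul 2⁻¹
  simpa only [Real.cosh_eq, neg_mul, div_eq_inv_mul] using hcosh

theorem hasExpLowerBound_cosh_mul (β : ℝ) : HasExpLowerBound fun y => Real.cosh (β * y) :=
  ⟨0, le_rfl, fun y => by simp [Real.one_le_cosh]⟩

section Levels

variable (K : ℕ) (q m : ℕ → ℝ) (β : ℝ)

theorem hasExpGrowth_and_hasLinearGrowth_parisiLevel (j : ℕ) :
    HasExpGrowth 0 (parisiLevel K q m β j) ∧ HasLinearGrowth (parisiLevel K q m β j) := by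
  induction j with
  | zero =>
    exact ⟨(hasExpGrowth_cosh_mul β).log (hasExpLowerBound_cosh_mul β),
      (hasExpLowerBound_cosh_mul β).hasLinearGrowth_log (hasExpGrowth_cosh_mul β)⟩
  | succ j ih => exact ⟨ih.1.pStep ih.2 _ _, ih.2.pStep ih.1 _ _⟩

end Levels

section Product

open scoped Matrix

variable {α ι : Type} [Fintype α]

theorem integral_add_sum_pi_stdGauss (C : ℝ) {f : α → ℝ → ℝ} (hf : ∀ a, HasExpGrowth 0 (f a)) :
    ∫ J, (C + ∑ a, f a (J a)) ∂(Measure.pi fun _ : α => stdGauss) =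
      C + ∑ a, ∫ z, f a z ∂stdGauss := by
  have hint (a : α) : Integrable (fun J => f a (J a)) (Measure.pi fun _ : α => stdGauss) :=
    integrable_comp_eval (X := fun _ => ℝ) (hasExpMoments_stdGauss.integrable (hf a))
  rw [integral_add (integrable_const C) (integrable_finsetSum _ fun a _ => hint a),
    integral_finsetSum _ fun a _ => hint a]
  simp [integral_eval_pi_stdGauss, (hf _).continuous]

theorem log_integral_exp_add_sum_pi_stdGauss {m : ℝ} (hm : m ≠ 0) (C : ℝ) {f : α → ℝ → ℝ}
    (hf : ∀ a, HasExpGrowth 0 fun z => Real.exp (m * f a z)) :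
    m⁻¹ * Real.log (∫ J, Real.exp (m * (C + ∑ a, f a (J a)))
        ∂(Measure.pi fun _ : α => stdGauss)) =
      C + ∑ a, m⁻¹ * Real.log (∫ z, Real.exp (m * f a z) ∂stdGauss) := by
  simp only [mul_add, Finset.mul_sum, Real.exp_add, Real.exp_sum, integral_const_mul]
  have hpos (a : α) := integral_exp_pos (hasExpMoments_stdGauss.integrable (hf a))
  rw [integral_fintype_prod_eq_prod (fun a z => Real.exp (m * f a z)),
    Real.log_mul (Real.exp_pos _).ne' (Finset.prod_pos fun a _ => hpos a).ne', Real.log_exp,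
    Real.log_prod fun a _ => (hpos a).ne', mul_add, inv_mul_cancel_left₀ hm, Finset.mul_sum]

theorem cumulantAvg_gaussField_sum [Finite ι] (S : Matrix ι α ℝ) {F : ℝ × (ι → ℝ) → ℝ}
    (hF : Continuous F) {θ C : ℝ} {g : ℝ → ℝ} (hg : HasExpGrowth 0 g) (hlin : HasLinearGrowth g)
    (hsum : ∀ y : α → ℝ, F (θ, S *ᵥ y) = C + ∑ a, g (y a)) {ρ : ℝ → ℝ} (hρ : ρ θ = 1)
    (m r : ℝ) (y : α → ℝ) :
    cumulantAvg m ρ (gaussField (√r • S)) F (θ, S *ᵥ y) = C + ∑ a, pStep m r g (y a) := by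
  have hshift (J : α → ℝ) : F (θ, S *ᵥ y + ρ θ • (√r • S) *ᵥ J) =
      C + ∑ a, g (y a + J a * √r) := by
    rw [← hsum, hρ, one_smul, Matrix.smul_mulVec, ← Matrix.mulVec_smul, ← Matrix.mulVec_add]
    simp [Pi.add_def, mul_comm]
  rcases eq_or_ne m 0 with rfl | hm
  · rw [cumulantAvg_zero, fieldAvg_gaussField _ ρ hF, pStep_zero]
    simp only [hshift]
    exact integral_add_sum_pi_stdGauss C fun a => (hg.comp_add_mul_sqrt r).comp_prodMk_left _
  · rw [cumulantAvg, if_neg hm, fieldAvg_gaussField _ ρ (by fun_prop), pStep_of_ne_zero hm]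
    simp only [hshift]
    exact log_integral_exp_add_sum_pi_stdGauss hm C fun a =>
      (hasExpGrowth_exp_mul_comp_add_mul_sqrt hg hlin m r).comp_prodMk_left _

end Product

end ParisiRecursion

/-! ## The covariance of the couplings -/

section ElementarySymmetric

variable {α : Type*} [Fintype α]

theorem sum_piAntidiag_le_one_eq [DecidableEq α] {R : Type*} [CommSemiring R] (n : ℕ) (t : α → R) :
    ∑ k ∈ Finset.piAntidiag Finset.univ n with ∀ i, k i ≤ 1,
        (Nat.multinomial Finset.univ k : R) * ∏ i, t i ^ k i =
      n.factorial * ∑ S ∈ Finset.powersetCard n Finset.univ, ∏ i ∈ S, t i := by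
  rw [Finset.mul_sum]
  refine (Finset.sum_bij' (fun (S : Finset α) _ i => if i ∈ S then 1 else 0)
    (fun k _ => ({i | k i = 1} : Finset α)) (fun S hS => ?_) (fun k hk => ?_) (fun S _ => by simp)
    (fun k hk => ?_) fun S hS => ?_).symm
  · rw [Finset.mem_powersetCard_univ] at hS
    suffices ∀ i, (if i ∈ S then 1 else 0) ≤ 1 by simpa [hS]
    intro i
    split_ifs <;> decide
  · simp only [Finset.mem_filter, Finset.mem_piAntidiag] at hk
    rw [Finset.mem_powersetCard_univ, Finset.card_filter, ← hk.1.1]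
    refine Finset.sum_congr rfl fun i _ => ?_
    have := hk.2 i
    grind
  · funext i
    have := (Finset.mem_filter.1 hk).2 i
    simp only [Finset.mem_filter, Finset.mem_univ, true_and]
    grind
  · rw [Finset.mem_powersetCard_univ] at hS
    have hfactorial (i : α) : (if i ∈ S then 1 else 0).factorial = 1 := by split_ifs <;> rfl
    simp [Nat.multinomial, hfactorial, hS, Finset.prod_ite_mem]

theorem sum_pow_eq_factorial_mul_add [DecidableEq α] {R : Type*} [CommSemiring R] (n : ℕ)
    (t : α → R) : (∑ i, t i) ^ n =
      n.factorial * ∑ S ∈ Finset.powersetCard n Finset.univ, ∏ i ∈ S, t i +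
      ∑ k ∈ Finset.piAntidiag Finset.univ n with ¬∀ i, k i ≤ 1,
        (Nat.multinomial Finset.univ k : R) * ∏ i, t i ^ k i := by
  rw [Finset.sum_pow_eq_sum_piAntidiag, ← sum_piAntidiag_le_one_eq,
    Finset.sum_filter_add_sum_filter_not]

/-- The repeated-index terms of `(∑ t) ^ n` are dominated by their values at `t = 1`. -/
theorem sum_pow_sub_le_factorial_mul (n : ℕ) {t : α → ℝ} (ht : ∀ i, |t i| ≤ 1) :
    (∑ i, t i) ^ n - ((Fintype.card α : ℝ) ^ n - (Fintype.card α).descFactorial n) ≤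
      n.factorial * ∑ S ∈ Finset.powersetCard n Finset.univ, ∏ i ∈ S, t i := by
  classical
  have hone := sum_pow_eq_factorial_mul_add (α := α) n (fun _ => (1 : ℝ))
  simp only [Finset.sum_const, Finset.card_univ, Finset.prod_const_one, one_pow, mul_one,
    nsmul_eq_mul, Finset.card_powersetCard] at hone
  rw [sum_pow_eq_factorial_mul_add, hone, Nat.descFactorial_eq_factorial_mul_choose, Nat.cast_mul]
  have hterm : ∑ k ∈ Finset.piAntidiag Finset.univ n with ¬∀ i, k i ≤ 1,
      (Nat.multinomial Finset.univ k : ℝ) * ∏ i, t i ^ k i ≤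
      ∑ k ∈ Finset.piAntidiag (Finset.univ : Finset α) n with ¬∀ i, k i ≤ 1,
        (Nat.multinomial Finset.univ k : ℝ) := by
    refine Finset.sum_le_sum fun k _ => mul_le_of_le_one_right (Nat.cast_nonneg _) ?_
    refine (le_abs_self _).trans ?_
    rw [Finset.abs_prod]
    refine Finset.prod_le_one (fun i _ => abs_nonneg _) fun i _ => ?_
    rw [abs_pow]
    exact pow_le_one₀ (abs_nonneg _) (ht i)
  linarith

end ElementarySymmetric

theorem mul_pow_sub_descFactorial_le (n k : ℕ) :
    (n : ℝ) * ((n : ℝ) ^ k - n.descFactorial k) ≤ k ^ 2 * (n : ℝ) ^ k := by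
  induction k with
  | zero => simp
  | succ k ih =>
    have hsub : (n : ℝ) - k ≤ ((n - k : ℕ) : ℝ) := by
      rw [sub_le_iff_le_add]
      exact_mod_cast (le_tsub_add : n ≤ n - k + k)
    have hpow : (n.descFactorial k : ℝ) ≤ (n : ℝ) ^ k := by
      exact_mod_cast Nat.descFactorial_le_pow n k
    rw [Nat.descFactorial_succ, Nat.cast_mul]
    calc (n : ℝ) * ((n : ℝ) ^ (k + 1) - ((n - k : ℕ) : ℝ) * n.descFactorial k)
        ≤ n * ((n : ℝ) ^ (k + 1) - (n - k) * n.descFactorial k) := by gcongr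
      _ = n * (n * ((n : ℝ) ^ k - n.descFactorial k)) + n * k * n.descFactorial k := by ring
      _ ≤ n * (k ^ 2 * (n : ℝ) ^ k) + n * k * (n : ℝ) ^ k := by gcongr
      _ ≤ ((k + 1 : ℕ) : ℝ) ^ 2 * (n : ℝ) ^ (k + 1) := by
        have : 0 ≤ ((k : ℝ) + 1) * (n : ℝ) ^ (k + 1) := by positivity
        push_cast
        rw [pow_succ _ k] at this ⊢
        linarith

theorem pow_add_mul_sub_le_pow {n : ℕ} (hn : Even n) (x y : ℝ) :
    x ^ n + n * x ^ (n - 1) * (y - x) ≤ y ^ n := by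
  have hderiv := hasDerivAt_pow n x
  rcases lt_trichotomy x y with hxy | rfl | hxy
  · have := hn.convexOn_pow.le_slope_of_hasDerivAt trivial trivial hxy hderiv
    rw [slope_def_field, le_div_iff₀ (sub_pos.2 hxy)] at this
    linarith
  · simp
  · have := hn.convexOn_pow.slope_le_of_hasDerivAt trivial trivial hxy hderiv
    rw [slope_def_field, div_le_iff₀ (sub_pos.2 hxy)] at this
    linarith

section SpinSystem

open scoped Matrix

theorem spin_mul_self (b : Bool) : spin b * spin b = 1 := by cases b <;> simp [spin]

theorem abs_spin (b : Bool) : |spin b| = 1 := by cases b <;> simp [spin]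

/-- The linear map sending the couplings `J` to the coupling part of `-β H`. -/
def couplingMatrix (p N : ℕ) (β : ℝ) : Matrix (Fin N → Bool) (Finset (Fin N)) ℝ := fun σ S =>
  if S ∈ Finset.powersetCard p Finset.univ then
    β * √(p.factorial / (2 * (N : ℝ) ^ (p - 1))) * ∏ i ∈ S, spin (σ i)
  else 0

/-- The linear map sending one-body fields `y` to the energies `β ∑ᵢ yᵢ σᵢ`. -/
def siteMatrix (N : ℕ) (β : ℝ) : Matrix (Fin N → Bool) (Fin N) ℝ := fun σ i => β * spin (σ i)

variable (p N : ℕ) (β : ℝ)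

theorem logSumExp_couplingMatrix_add_siteMatrix (θ h : ℝ) (J : Finset (Fin N) → ℝ) :
    logSumExp (θ, siteMatrix N β *ᵥ (fun _ => h) + couplingMatrix p N β *ᵥ J) =
      Real.log (ZP p N β h J) := by
  refine congrArg Real.log (Finset.sum_congr rfl fun σ _ => congrArg Real.exp ?_)
  simp only [hamP, Pi.add_apply, Matrix.mulVec, dotProduct, siteMatrix, couplingMatrix, ite_mul,
    zero_mul, Finset.sum_ite_mem, Finset.univ_inter, mul_assoc, mul_comm (J _), ← Finset.mul_sum,
    ← Finset.sum_mul]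
  ring

theorem logSumExp_siteMatrix (θ : ℝ) (y : Fin N → ℝ) :
    logSumExp (θ, siteMatrix N β *ᵥ y) =
      N * Real.log 2 + ∑ i, Real.log (Real.cosh (β * y i)) := by
  have hsum : ∑ σ, Real.exp ((siteMatrix N β *ᵥ y) σ) = ∏ i, (2 * Real.cosh (β * y i)) := by
    calc ∑ σ, Real.exp ((siteMatrix N β *ᵥ y) σ)
        = ∑ σ : Fin N → Bool, ∏ i, Real.exp (β * spin (σ i) * y i) := by
          simp only [Matrix.mulVec, dotProduct, siteMatrix, Real.exp_sum]
      _ = ∏ i, ∑ b, Real.exp (β * spin b * y i) :=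
        (Fintype.prod_sum fun i b => Real.exp (β * spin b * y i)).symm
      _ = ∏ i, (2 * Real.cosh (β * y i)) := by
          simp [spin, Real.cosh_eq, mul_div_cancel₀]
  rw [logSumExp, hsum, Real.log_prod fun i _ => (mul_pos two_pos (Real.cosh_pos _)).ne']
  simp [Real.log_mul, (Real.cosh_pos _).ne', Finset.sum_add_distrib]

theorem couplingMatrix_mul_transpose (σ τ : Fin N → Bool) :
    (couplingMatrix p N β * (couplingMatrix p N β)ᵀ) σ τ =
      β ^ 2 / (2 * (N : ℝ) ^ (p - 1)) * (p.factorial *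
        ∑ S ∈ Finset.powersetCard p Finset.univ, ∏ i ∈ S, spin (σ i) * spin (τ i)) := by
  have hsqrt := Real.sq_sqrt (show 0 ≤ p.factorial / (2 * (N : ℝ) ^ (p - 1)) by positivity)
  simp only [Matrix.mul_apply, Matrix.transpose_apply, couplingMatrix,
    ite_zero_mul_ite_zero, and_self, Finset.sum_ite_mem, Finset.univ_inter, Finset.mul_sum,
    Finset.prod_mul_distrib]
  refine Finset.sum_congr rfl fun S _ => ?_
  linear_combination β ^ 2 * (∏ i ∈ S, spin (σ i)) * (∏ i ∈ S, spin (τ i)) * hsqrt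

variable {N}

theorem siteMatrix_mul_transpose (hN : 1 ≤ N) (σ τ : Fin N → Bool) :
    (siteMatrix N β * (siteMatrix N β)ᵀ) σ τ = β ^ 2 * N * overlap N σ τ := by
  have hN0 : (N : ℝ) ≠ 0 := by positivity
  simp only [Matrix.mul_apply, Matrix.transpose_apply, siteMatrix, overlap]
  rw [mul_assoc (β ^ 2), mul_inv_cancel_left₀ hN0, Finset.mul_sum]
  exact Finset.sum_congr rfl fun i _ => by ring

variable {p}

theorem le_couplingMatrix_mul_transpose (hp : 1 ≤ p) (hN : 1 ≤ N) (σ τ : Fin N → Bool) :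
    β ^ 2 / 2 * (N * overlap N σ τ ^ p - p ^ 2) ≤
      (couplingMatrix p N β * (couplingMatrix p N β)ᵀ) σ τ := by
  have hN0 : (0 : ℝ) < N := by positivity
  have hNp : (N : ℝ) ^ p = N ^ (p - 1) * N := (pow_sub_one_mul (by omega) _).symm
  have hesymm := sum_pow_sub_le_factorial_mul p (t := fun i => spin (σ i) * spin (τ i))
    fun i => by rw [abs_mul, abs_spin, abs_spin, one_mul]
  have hdesc : (N : ℝ) ^ p - N.descFactorial p ≤ p ^ 2 * N ^ (p - 1) := by
    refine le_of_mul_le_mul_left ((mul_pow_sub_descFactorial_le N p).trans_eq ?_) hN0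
    rw [hNp]
    ring
  have hoverlap : ∑ i, spin (σ i) * spin (τ i) = N * overlap N σ τ := by
    rw [overlap, mul_inv_cancel_left₀ hN0.ne']
  rw [Fintype.card_fin, hoverlap, mul_pow] at hesymm
  rw [couplingMatrix_mul_transpose]
  calc β ^ 2 / 2 * (N * overlap N σ τ ^ p - p ^ 2)
      = β ^ 2 / (2 * N ^ (p - 1)) *
          (N ^ p * overlap N σ τ ^ p - p ^ 2 * N ^ (p - 1)) := by
        rw [hNp]
        field_simp
    _ ≤ _ := mul_le_mul_of_nonneg_left (by linarith) (by positivity)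

theorem couplingMatrix_mul_transpose_self_le (hp : 1 ≤ p) (hN : 1 ≤ N) (σ : Fin N → Bool) :
    (couplingMatrix p N β * (couplingMatrix p N β)ᵀ) σ σ ≤ β ^ 2 / 2 * N := by
  have hdesc : ((p.factorial * N.choose p : ℕ) : ℝ) ≤ (N : ℝ) ^ p := by
    rw [← Nat.descFactorial_eq_factorial_mul_choose]
    exact_mod_cast N.descFactorial_le_pow p
  rw [couplingMatrix_mul_transpose]
  simp only [spin_mul_self, Finset.prod_const_one, Finset.sum_const, Finset.card_powersetCard,
    Finset.card_univ, Fintype.card_fin, nsmul_eq_mul, mul_one, ← Nat.cast_mul]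
  calc β ^ 2 / (2 * N ^ (p - 1)) * ((p.factorial * N.choose p : ℕ) : ℝ)
      ≤ β ^ 2 / (2 * N ^ (p - 1)) * N ^ p := by gcongr
    _ = β ^ 2 / 2 * N := by
        rw [← pow_sub_one_mul (by omega : p ≠ 0) (N : ℝ)]
        field_simp

end SpinSystem

section OverlapVariable

variable {p : ℕ}

theorem mul_qBar_pow_sub_one (hp : 2 ≤ p) {q : ℝ} (hq : 0 ≤ q) :
    p * qBar p q ^ (p - 1) = 2 * q := by
  have hp' : (2 : ℝ) ≤ p := by exact_mod_cast hp
  rw [qBar, ← Real.rpow_natCast, ← Real.rpow_mul (by positivity), Nat.cast_sub (by omega),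
    Nat.cast_one, inv_mul_cancel₀ (by linarith), Real.rpow_one]
  field_simp

theorem qBar_pow_eq (hp : 2 ≤ p) {q : ℝ} (hq : 0 ≤ q) :
    qBar p q ^ p = 2 * q / p * qBar p q := by
  have hp0 : (p : ℝ) ≠ 0 := by positivity
  rw [← pow_sub_one_mul (by omega : p ≠ 0), ← mul_qBar_pow_sub_one hp hq,
    mul_div_cancel_left₀ _ hp0]

theorem qBar_half (hp : p ≠ 0) : qBar p (p / 2) = 1 := by
  have hp' : (p : ℝ) ≠ 0 := by exact_mod_cast hp
  rw [qBar, mul_div_cancel₀ _ two_ne_zero, div_self hp', Real.one_rpow]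

theorem continuous_qBar (hp : 1 ≤ p) : Continuous (qBar p) := by
  have hp' : (1 : ℝ) ≤ p := by exact_mod_cast hp
  exact Continuous.rpow_const (by fun_prop) fun _ => Or.inr (inv_nonneg.2 (by linarith))

theorem integral_qBar (hp : 2 ≤ p) {a b : ℝ} (ha : 0 ≤ a) (hb : 0 ≤ b) :
    ∫ q in a..b, qBar p q = ((p : ℝ) - 1) / 2 * (qBar p b ^ p - qBar p a ^ p) := by
  have hp' : (2 : ℝ) ≤ p := by exact_mod_cast hp
  have hp1 : (p : ℝ) - 1 ≠ 0 := by linarith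
  have hexponent : ((p : ℝ) - 1)⁻¹ + 1 = ((p : ℝ) - 1)⁻¹ * p := by field_simp; ring
  have hpow {q : ℝ} (hq : 0 ≤ q) : qBar p q ^ p = (2 / p * q) ^ (((p : ℝ) - 1)⁻¹ + 1) := by
    rw [qBar, ← Real.rpow_natCast, ← Real.rpow_mul (by positivity), hexponent, div_mul_eq_mul_div]
  have hqBar (q : ℝ) : qBar p q = (2 / p * q) ^ ((p : ℝ) - 1)⁻¹ := by
    rw [qBar, div_mul_eq_mul_div]
  rw [hpow ha, hpow hb]
  simp only [hqBar]
  rw [intervalIntegral.integral_comp_mul_left (fun q => q ^ ((p : ℝ) - 1)⁻¹) (by positivity),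
    integral_rpow (Or.inl (by linarith [inv_pos.2 (by linarith : 0 < (p : ℝ) - 1)])), hexponent,
    smul_eq_mul]
  field_simp

end OverlapVariable

section OverlapGap

open scoped Matrix

/-- The covariance of the couplings minus that of one-body fields of variance `q`. -/
def overlapGap (p N : ℕ) (β q : ℝ) : Matrix (Fin N → Bool) (Fin N → Bool) ℝ :=
  couplingMatrix p N β * (couplingMatrix p N β)ᵀ - q • (siteMatrix N β * (siteMatrix N β)ᵀ)

/-- Minus a lower bound for the entries of `overlapGap p N β q`. -/
def gapBound (p N : ℕ) (β q : ℝ) : ℝ := β ^ 2 / 2 * (N * ((p - 1) * qBar p q ^ p) + p ^ 2)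

variable {p N : ℕ}

theorem neg_gapBound_le_overlapGap (hp : Even p) (hp2 : 2 ≤ p) (hN : 1 ≤ N) (β : ℝ) {q : ℝ}
    (hq : 0 ≤ q) (σ τ : Fin N → Bool) : -gapBound p N β q ≤ overlapGap p N β q σ τ := by
  have htangent : 2 * q * overlap N σ τ - (p - 1) * qBar p q ^ p ≤ overlap N σ τ ^ p := by
    refine le_of_eq_of_le ?_ (pow_add_mul_sub_le_pow hp (qBar p q) _)
    rw [mul_qBar_pow_sub_one hp2 hq, qBar_pow_eq hp2 hq]
    field_simp
    ring
  rw [overlapGap, Matrix.sub_apply, Matrix.smul_apply, smul_eq_mul,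
    siteMatrix_mul_transpose β hN, gapBound]
  calc -(β ^ 2 / 2 * (N * ((p - 1) * qBar p q ^ p) + p ^ 2))
      = β ^ 2 / 2 * (N * (2 * q * overlap N σ τ - (p - 1) * qBar p q ^ p) - p ^ 2) -
          q * (β ^ 2 * N * overlap N σ τ) := by ring
    _ ≤ β ^ 2 / 2 * (N * overlap N σ τ ^ p - p ^ 2) - q * (β ^ 2 * N * overlap N σ τ) := by
        gcongr
    _ ≤ _ := sub_le_sub_right (le_couplingMatrix_mul_transpose β (by omega) hN σ τ) _

theorem overlapGap_self_le (hp2 : 2 ≤ p) (hN : 1 ≤ N) (β : ℝ) (σ : Fin N → Bool) :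
    overlapGap p N β (p / 2) σ σ ≤ β ^ 2 * p ^ 2 / 2 - gapBound p N β (p / 2) := by
  have hN0 : (N : ℝ) ≠ 0 := by positivity
  have hoverlap : overlap N σ σ = 1 := by simp [overlap, spin_mul_self, hN0]
  rw [overlapGap, Matrix.sub_apply, Matrix.smul_apply, smul_eq_mul,
    siteMatrix_mul_transpose β hN, hoverlap, gapBound, qBar_half (by omega), one_pow]
  linarith [couplingMatrix_mul_transpose_self_le β (by omega : 1 ≤ p) hN σ]

theorem gapBound_sub (hp2 : 2 ≤ p) (N : ℕ) (β : ℝ) {a b : ℝ} (ha : 0 ≤ a) (hb : 0 ≤ b) :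
    gapBound p N β b - gapBound p N β a = β ^ 2 * N * ∫ q in a..b, qBar p q := by
  rw [integral_qBar hp2 ha hb, gapBound, gapBound]
  ring

end OverlapGap

namespace POrderParam

variable {p : ℕ} (X : POrderParam p)

theorem q_le_q {a b : ℕ} (hab : a ≤ b) (hb : b ≤ X.K) : X.q a ≤ X.q b := by
  induction b, hab using Nat.le_induction with
  | base => exact le_rfl
  | succ b _ ih => exact (ih (by omega)).trans (X.hq_mono b (by omega))

theorem q_nonneg {a : ℕ} (ha : a ≤ X.K) : 0 ≤ X.q a := by
  simpa only [X.hq0] using X.q_le_q a.zero_le ha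

theorem m_nonneg {a : ℕ} (ha : 1 ≤ a) (haK : a ≤ X.K) : 0 ≤ X.m a := by
  induction a, ha using Nat.le_induction with
  | base => exact X.hm1
  | succ a ha ih => exact (ih (by omega)).trans (X.hm_mono a ha (by omega))

theorem xFunP_eq {a : ℕ} (ha : a < X.K) {r : ℝ} (har : X.q a ≤ r) (hra : r < X.q (a + 1)) :
    xFunP p X.K X.q X.m r = X.m (a + 1) := by
  have hr : r < p / 2 := by
    rw [← X.hqK]
    exact hra.trans_le (X.q_le_q ha le_rfl)
  have hnode : sInf {b : ℕ | r < X.q b} = a + 1 := by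
    refine IsLeast.csInf_eq ⟨hra, fun b hb => ?_⟩
    by_contra! hba
    exact hb.not_ge ((X.q_le_q (Nat.le_of_lt_succ hba) ha.le).trans har)
  rw [xFunP, if_neg hr.not_ge, hnode]

theorem eqOn_qBar_mul_xFunP {a : ℕ} (ha : a < X.K) :
    Set.EqOn (fun r => qBar p r * X.m (a + 1)) (fun r => qBar p r * xFunP p X.K X.q X.m r)
      (Set.uIoo (X.q a) (X.q (a + 1))) := fun r hr => by
  rw [Set.uIoo_of_le (X.hq_mono a ha)] at hr
  simp only [X.xFunP_eq ha hr.1.le hr.2]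

theorem intervalIntegrable_qBar_mul_xFunP (hp : 1 ≤ p) {a : ℕ} (ha : a < X.K) :
    IntervalIntegrable (fun r => qBar p r * xFunP p X.K X.q X.m r) volume
      (X.q a) (X.q (a + 1)) :=
  (((continuous_qBar hp).mul continuous_const).intervalIntegrable _ _).congr_uIoo
    (X.eqOn_qBar_mul_xFunP ha)

theorem integral_qBar_mul_xFunP (hp : 1 ≤ p) {a : ℕ} (ha : a < X.K) :
    ∫ r in X.q a..(p / 2), qBar p r * xFunP p X.K X.q X.m r =
      X.m (a + 1) * (∫ r in X.q a..X.q (a + 1), qBar p r) +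
        ∫ r in X.q (a + 1)..(p / 2), qBar p r * xFunP p X.K X.q X.m r := by
  have htail : IntervalIntegrable (fun r => qBar p r * xFunP p X.K X.q X.m r) volume
      (X.q (a + 1)) (p / 2) := by
    rw [← X.hqK]
    exact IntervalIntegrable.trans_iterate_Ico ha fun b hb =>
      X.intervalIntegrable_qBar_mul_xFunP hp hb.2
  rw [← intervalIntegral.integral_add_adjacent_intervals
      (X.intervalIntegrable_qBar_mul_xFunP hp ha) htail,
    ← intervalIntegral.integral_congr_uIoo (X.eqOn_qBar_mul_xFunP ha),
    intervalIntegral.integral_mul_const, mul_comm]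

end POrderParam

/-! ## The interpolation -/

section Levels

open scoped Matrix

/-- The interpolating counterpart of `parisiLevel`: the log partition function after `j` cumulant
averages over one-body Gaussian fields of amplitude `cos θ`. -/
def siteLevel (N K : ℕ) (q m : ℕ → ℝ) (β : ℝ) : ℕ → ℝ × ((Fin N → Bool) → ℝ) → ℝ
  | 0 => logSumExp
  | j + 1 => cumulantAvg (m (K - j)) Real.cos
      (gaussField (√(q (K - j) - q (K - j - 1)) • siteMatrix N β)) (siteLevel N K q m β j)

section Endpoints

variable (N K : ℕ) (q m : ℕ → ℝ) (β : ℝ)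

theorem siteLevel_pi_div_two (j : ℕ) (x : (Fin N → Bool) → ℝ) :
    siteLevel N K q m β j (Real.pi / 2, x) = logSumExp (Real.pi / 2, x) := by
  induction j with
  | zero => rfl
  | succ j ih => rw [siteLevel, cumulantAvg_of_amplitude_eq_zero Real.cos_pi_div_two, ih]

theorem siteLevel_zero_siteMatrix {j : ℕ} (hcont : ∀ i < j, Continuous (siteLevel N K q m β i))
    (y : Fin N → ℝ) : siteLevel N K q m β j (0, siteMatrix N β *ᵥ y) =
      N * Real.log 2 + ∑ i, parisiLevel K q m β j (y i) := by
  induction j generalizing y with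
  | zero => exact logSumExp_siteMatrix N β 0 y
  | succ j ih =>
    have hlevel := hasExpGrowth_and_hasLinearGrowth_parisiLevel K q m β j
    exact cumulantAvg_gaussField_sum _ (hcont j j.lt_succ_self) hlevel.1 hlevel.2
      (ih fun i hi => hcont i (hi.trans j.lt_succ_self)) Real.cos_zero _ _ y

end Endpoints

/-- `F` is a Parisi subsolution at overlap level `q`, when the order parameter takes the value `m`
just above `q` and `I` is its integral against `q̄` from `q` to `p / 2`. -/
def IsLevelSubsolution (p N : ℕ) (β m q I : ℝ) (F : ℝ × ((Fin N → Bool) → ℝ) → ℝ) : Prop :=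
  IsParisiSubsolution m (overlapGap p N β q)
    (β ^ 2 * p ^ 2 / 2 - m * gapBound p N β q - β ^ 2 * N * I) F

section Recursion

variable {p N : ℕ}

theorem isLevelSubsolution_logSumExp (hp2 : 2 ≤ p) (hN : 1 ≤ N) (β : ℝ) :
    IsLevelSubsolution p N β 1 (p / 2) 0 logSumExp :=
  isParisiSubsolution_logSumExp fun σ => by
    rw [one_mul, mul_zero, sub_zero]
    exact overlapGap_self_le hp2 hN β σ

namespace IsLevelSubsolution

variable {β m q I : ℝ} {F : ℝ × ((Fin N → Bool) → ℝ) → ℝ}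

theorem of_le (hF : IsLevelSubsolution p N β m q I F) (hp : Even p) (hp2 : 2 ≤ p) (hN : 1 ≤ N)
    (hq : 0 ≤ q) {m' : ℝ} (hm : m' ≤ m) : IsLevelSubsolution p N β m' q I F := by
  have h := IsParisiSubsolution.of_le hF hm (neg_gapBound_le_overlapGap hp hp2 hN β hq)
  rw [IsLevelSubsolution]
  convert h using 1
  ring

theorem map_cumulantAvg (hF : IsLevelSubsolution p N β m q I F) (hp2 : 2 ≤ p) (hm : 0 ≤ m)
    {q₀ : ℝ} (hq₀ : 0 ≤ q₀) (hq : q₀ ≤ q) :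
    IsLevelSubsolution p N β m q₀ (m * (∫ r in q₀..q, qBar p r) + I)
      (cumulantAvg m Real.cos (gaussField (√(q - q₀) • siteMatrix N β)) F) := by
  have h := IsParisiSubsolution.map_cumulantAvg hm hF .cos
    (integral_id_gaussField (√(q - q₀) • siteMatrix N β))
  have hcov : overlapGap p N β q₀ =
      overlapGap p N β q - (-1 : ℝ) • secondMoment (gaussField (√(q - q₀) • siteMatrix N β)) := by
    rw [secondMoment_gaussField, Matrix.transpose_smul, Matrix.smul_mul, Matrix.mul_smul,
      smul_smul (√_), Real.mul_self_sqrt (sub_nonneg.2 hq), overlapGap, overlapGap]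
    module
  rw [IsLevelSubsolution, hcov]
  convert h using 1
  linear_combination m * gapBound_sub hp2 N β hq₀ (hq₀.trans hq)

end IsLevelSubsolution

namespace POrderParam

variable (X : POrderParam p)

/-- The value of the order parameter just above the node `q a`, and `1` at the top node. -/
def valueAbove (a : ℕ) : ℝ := if a = X.K then 1 else X.m (a + 1)

theorem valueAbove_of_lt {a : ℕ} (ha : a < X.K) : X.valueAbove a = X.m (a + 1) := if_neg ha.ne

theorem m_le_valueAbove {a : ℕ} (ha : 1 ≤ a) (haK : a ≤ X.K) : X.m a ≤ X.valueAbove a := by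
  rcases haK.eq_or_lt with rfl | hlt
  · exact X.hmK.trans_eq (if_pos rfl).symm
  · exact (X.hm_mono a ha hlt).trans_eq (X.valueAbove_of_lt hlt).symm

theorem isLevelSubsolution_siteLevel (hp : Even p) (hp2 : 2 ≤ p) (hN : 1 ≤ N) (β : ℝ) {j : ℕ}
    (hj : j ≤ X.K) : IsLevelSubsolution p N β (X.valueAbove (X.K - j)) (X.q (X.K - j))
      (∫ r in X.q (X.K - j)..(p / 2), qBar p r * xFunP p X.K X.q X.m r)
      (siteLevel N X.K X.q X.m β j) := by
  induction j with
  | zero =>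
    rw [Nat.sub_zero, X.hqK, intervalIntegral.integral_same, valueAbove, if_pos rfl]
    exact isLevelSubsolution_logSumExp hp2 hN β
  | succ j ih =>
    obtain ⟨a, ha⟩ : ∃ a, X.K - j = a + 1 := ⟨X.K - j - 1, by omega⟩
    have haK : a < X.K := by omega
    have hlevel := ih (by omega)
    rw [siteLevel, ← Nat.sub_sub, ha, Nat.add_sub_cancel]
    rw [ha] at hlevel
    rw [X.integral_qBar_mul_xFunP (by omega) haK, X.valueAbove_of_lt haK]
    have hlower := hlevel.of_le hp hp2 hN (X.q_nonneg haK) (X.m_le_valueAbove (by omega) haK)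
    exact hlower.map_cumulantAvg hp2 (X.m_nonneg (by omega) haK) (X.q_nonneg haK.le)
      (X.hq_mono a haK)

theorem continuous_siteLevel (hp : Even p) (hp2 : 2 ≤ p) (hN : 1 ≤ N) (β : ℝ) {j : ℕ}
    (hj : j ≤ X.K) : Continuous (siteLevel N X.K X.q X.m β j) :=
  (X.isLevelSubsolution_siteLevel hp hp2 hN β hj).hasExpGrowth.continuous

theorem isParisiSubsolution_siteLevel (hp : Even p) (hp2 : 2 ≤ p) (hN : 1 ≤ N) (β : ℝ) :
    IsParisiSubsolution 0 (couplingMatrix p N β * (couplingMatrix p N β)ᵀ)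
      (β ^ 2 * p ^ 2 / 2 -
        β ^ 2 * N * ∫ r in 0..(p / 2), qBar p r * xFunP p X.K X.q X.m r)
      (siteLevel N X.K X.q X.m β X.K) := by
  have hlevel := X.isLevelSubsolution_siteLevel hp hp2 hN β le_rfl
  rw [Nat.sub_self, X.hq0, X.valueAbove_of_lt X.hK] at hlevel
  simpa [IsLevelSubsolution, overlapGap] using hlevel.of_le hp hp2 hN le_rfl X.hm1

end POrderParam

end Recursion

end Levels

section FreeEnergy

open scoped Matrix

variable {p N : ℕ}

theorem POrderParam.integral_log_ZP_le (X : POrderParam p) (hp : Even p) (hp2 : 2 ≤ p)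
    (hN : 1 ≤ N) (β h : ℝ) : ∫ J, Real.log (ZP p N β h J) ∂gaussP N ≤
      N * trialAlphaP p X.K X.q X.m β h + β ^ 2 * p ^ 2 / 4 := by
  have hcont {j : ℕ} (hj : j ≤ X.K) := X.continuous_siteLevel hp hp2 hN β hj
  have hlevel := (X.isParisiSubsolution_siteLevel hp hp2 hN β).map_cumulantAvg le_rfl .sin
    (integral_id_gaussField (couplingMatrix p N β))
  rw [secondMoment_gaussField, one_smul, sub_self, cumulantAvg_zero] at hlevel
  have hgap := hlevel.sub_le_half (siteMatrix N β *ᵥ fun _ => h)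
  rw [fieldAvg_gaussField _ _ (hcont le_rfl), fieldAvg_of_amplitude_eq_zero Real.sin_zero,
    siteLevel_zero_siteMatrix N X.K X.q X.m β fun i hi => hcont hi.le] at hgap
  simp only [Real.sin_pi_div_two, one_smul, siteLevel_pi_div_two,
    logSumExp_couplingMatrix_add_siteMatrix, Finset.sum_const, Finset.card_univ, Fintype.card_fin,
    nsmul_eq_mul] at hgap
  rw [trialAlphaP, gaussP]
  linarith

theorem quenchedFEP_le (hp : Even p) (hp2 : 2 ≤ p) (X : POrderParam p) (hN : 1 ≤ N) (β h : ℝ) :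
    quenchedFEP p N β h ≤ trialAlphaP p X.K X.q X.m β h + β ^ 2 * p ^ 2 / 4 / N := by
  have hN0 : (0 : ℝ) < N := by positivity
  rw [quenchedFEP, inv_mul_le_iff₀ hN0, mul_add, mul_div_cancel₀ _ hN0.ne']
  exact X.integral_log_ZP_le hp hp2 hN β h

theorem integrable_log_ZP (p N : ℕ) (β h : ℝ) :
    Integrable (fun J => Real.log (ZP p N β h J)) (gaussP N) := by
  have hlse : HasExpGrowth 2 (logSumExp (ι := Fin N → Bool)) :=
    (isParisiSubsolution_logSumExp (M := 0) (c := 0) fun _ => le_rfl).hasExpGrowth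
  let energy : (Finset (Fin N) → ℝ) × ((Fin N → Bool) → ℝ) →L[ℝ] ℝ × ((Fin N → Bool) → ℝ) :=
    (ContinuousLinearMap.inr ℝ ℝ _).comp (ContinuousLinearMap.snd ℝ _ _ +
      (couplingMatrix p N β).mulVecLin.toContinuousLinearMap.comp (.fst ℝ _ _))
  have hint := integrable_of_pi_stdGauss
    ((hlse.comp (.clm energy) (.clm energy)).comp_prodMk_left (siteMatrix N β *ᵥ fun _ => h))
  exact hint.congr (ae_of_all _ fun J => logSumExp_couplingMatrix_add_siteMatrix p N β 0 h J)

theorem sqrt_mul_sum_add_le_log_ZP (p N : ℕ) (β h : ℝ) (J : Finset (Fin N) → ℝ) :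
    β * √(p.factorial / (2 * (N : ℝ) ^ (p - 1))) *
        ∑ S ∈ Finset.powersetCard p Finset.univ, J S + N * (β * h) ≤
      Real.log (ZP p N β h J) := by
  have hground : Real.exp (-(β * hamP p N h J fun _ => true)) ≤ ZP p N β h J :=
    Finset.single_le_sum (f := fun σ => Real.exp (-(β * hamP p N h J σ)))
      (fun σ _ => (Real.exp_pos _).le) (Finset.mem_univ _)
  have hlog := Real.log_le_log (Real.exp_pos _) hground
  rw [Real.log_exp] at hlog
  refine le_of_eq_of_le ?_ hlog
  simp only [hamP, spin, if_true, Finset.prod_const_one, mul_one, Finset.sum_const,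
    Finset.card_univ, Fintype.card_fin, nsmul_eq_mul]
  ring

theorem mul_le_quenchedFEP (p : ℕ) (hN : 1 ≤ N) (β h : ℝ) : β * h ≤ quenchedFEP p N β h := by
  have hN0 : (0 : ℝ) < N := by positivity
  have hJ (S : Finset (Fin N)) : Integrable (fun J : Finset (Fin N) → ℝ => J S) (gaussP N) :=
    integrable_of_pi_stdGauss (n := 0) (.apply S)
  have hsum := (integrable_finsetSum (Finset.powersetCard p Finset.univ) fun S _ => hJ S).const_mul
    (β * √(p.factorial / (2 * (N : ℝ) ^ (p - 1))))
  rw [quenchedFEP, le_inv_mul_iff₀ hN0]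
  calc N * (β * h) = ∫ J, (β * √(p.factorial / (2 * (N : ℝ) ^ (p - 1))) *
        ∑ S ∈ Finset.powersetCard p Finset.univ, J S + N * (β * h)) ∂gaussP N := by
        rw [integral_add hsum (integrable_const _), integral_const_mul,
          integral_finsetSum _ fun S _ => hJ S]
        simp [gaussP, integral_apply_pi_stdGauss]
    _ ≤ ∫ J, Real.log (ZP p N β h J) ∂gaussP N :=
        integral_mono (hsum.add (integrable_const _)) (integrable_log_ZP p N β h)
          (sqrt_mul_sum_add_le_log_ZP p N β h)

instance (p : ℕ) : Nonempty (POrderParam p) :=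
  ⟨{ K := 1
     hK := le_rfl
     q := fun a => if a = 0 then 0 else p / 2
     m := 0
     hq0 := if_pos rfl
     hqK := if_neg one_ne_zero
     hq_mono := fun a ha => by
       rw [Nat.lt_one_iff.1 ha, if_pos rfl, if_neg (by omega)]
       positivity
     hm1 := le_rfl
     hm_mono := fun _ _ _ => le_rfl
     hmK := zero_le_one }⟩

theorem limsup_quenchedFEP_le (hp : Even p) (hp2 : 2 ≤ p) (X : POrderParam p) (β h : ℝ) :
    limsup (fun N : ℕ => quenchedFEP p N β h) atTop ≤ trialAlphaP p X.K X.q X.m β h := by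
  have hlim : Tendsto (fun N : ℕ => trialAlphaP p X.K X.q X.m β h + β ^ 2 * p ^ 2 / 4 / N) atTop
      (nhds (trialAlphaP p X.K X.q X.m β h)) := by
    simpa using (tendsto_const_div_atTop_nhds_zero_nat (β ^ 2 * p ^ 2 / 4)).const_add
      (trialAlphaP p X.K X.q X.m β h)
  have hlower : ∀ᶠ N : ℕ in atTop, β * h ≤ quenchedFEP p N β h :=
    (eventually_ge_atTop 1).mono fun N hN => mul_le_quenchedFEP p hN β h
  rw [← hlim.limsup_eq]
  exact limsup_le_limsup
    ((eventually_ge_atTop 1).mono fun N hN => quenchedFEP_le hp hp2 X hN β h)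
    (isBoundedUnder_of_eventually_ge hlower).isCoboundedUnder_le hlim.isBoundedUnder_le

theorem pspin_guerra_bound_general (p : ℕ) (hp : Even p) (hp2 : 2 ≤ p) (β h : ℝ) :
    (∀ X : POrderParam p, ∀ N : ℕ, 1 ≤ N →
        quenchedFEP p N β h ≤ trialAlphaP p X.K X.q X.m β h + β ^ 2 * p ^ 2 / 4 / N)
    ∧ limsup (fun N : ℕ => quenchedFEP p N β h) atTop
        ≤ ⨅ X : POrderParam p, trialAlphaP p X.K X.q X.m β h :=
  ⟨fun X _ hN => quenchedFEP_le hp hp2 X hN β h,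
    le_ciInf fun X => limsup_quenchedFEP_le hp hp2 X β h⟩

end FreeEnergy

/-- broken replica symmetry bound for the p-spin model, `p` even:
for every `β ≥ 0`, `h ∈ ℝ`, and every piecewise constant functional order parameter `x`
on `[0, p/2]`, there is a constant `C ≥ 0` (independent of `N`) with
`N⁻¹ E log Z_N^{(p)}(β,h,J) ≤ ᾱ_p(β,h;x) + C/N` for all `N ≥ 1`; consequently
`limsup_{N→∞} N⁻¹ E log Z_N^{(p)}(β,h,J) ≤ inf_x ᾱ_p(β,h;x)`. -/
theorem pspin_guerra_bound (p : ℕ) (hp : Even p) (hp2 : 2 ≤ p) (β h : ℝ) (hβ : 0 ≤ β) :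
    (∀ X : POrderParam p, ∃ C : ℝ, 0 ≤ C ∧ ∀ N : ℕ, 1 ≤ N →
        quenchedFEP p N β h ≤ trialAlphaP p X.K X.q X.m β h + C / N)
    ∧ Filter.limsup (fun N : ℕ => quenchedFEP p N β h) Filter.atTop
        ≤ ⨅ X : POrderParam p, trialAlphaP p X.K X.q X.m β h :=
  (pspin_guerra_bound_general p hp hp2 β h).imp_left fun hbound X =>
    ⟨β ^ 2 * p ^ 2 / 4, by positivity, hbound X⟩

end
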